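/- arXiv:2403.05270 — 5 statements merged into one kernel-verified Lean document; each statement's English description precedes it below -/
import Mathlib

section
/- For every integer n ≥ 4 there exists a family F of n pairwise intersecting, pairwise distinct circles in the plane ℝ² such that exactly 2n − 2 unordered pairs of circles of F create a lens in the arrangement A(F). -/
open Metric Set

noncomputable section

/-- The Euclidean plane ℝ². -/
abbrev Plane := EuclideanSpace ℝ (Fin 2)

/-- A circle in the plane: a center and a positive radius. -/
structure Circle2 where
  center : Plane
  radius : ℝ
  radius_pos : 0 < radius

instance : DecidableEq Circle2 := Classical.decEq _

/-- The circle itself, as a set of points. -/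
def Circle2.sphere (C : Circle2) : Set Plane := Metric.sphere C.center C.radius

/-- The closed disc bounded by the circle. -/
def Circle2.disc (C : Circle2) : Set Plane := Metric.closedBall C.center C.radius

/-- Two circles of the family `F` create a lens in the arrangement `A(F)` if they
intersect in exactly two points and the interior of the intersection of their closed
discs is disjoint from every circle of `F`. -/
def CreatesLens (F : Finset Circle2) (C1 C2 : Circle2) : Prop :=
  (C1.sphere ∩ C2.sphere).ncard = 2 ∧
    ∀ C ∈ F, interior (C1.disc ∩ C2.disc) ∩ C.sphere = ∅

/-!
Let `A` and `B` be the unit circles centred at `(0, 1)` and `(0, -1)`, and for `t ≥ 1` let `D t` be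
the circle centred at `(t, 0)` that is externally tangent to both; its radius is `√(t² + 1) - 1`.
Take `A`, `B` and `n - 2` circles `D t`, and enlarge all the radii by the same small `ε > 0`.

A disc externally tangent to two others meets both at the same point only if the three centres are
collinear. So no three of the original discs, one of which is `A` or `B`, have a common point, and
by compactness this survives a small enlargement. Hence `A` creates a lens with every other circle,
and so does `B`: these are `2n - 3` lenses.

The power of a point with respect to `D t` is a convex function of `t`, so the intersection of the
first and the last of the discs `D t` lies inside all the others, and this pair creates one more
lens. Any other pair of the `D t` has in its intersection the rightmost point of the first circle or
the leftmost point of the last one.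
-/

open Filter Topology
open scoped NNReal

section SpheresInEuclideanPlane

variable {V P : Type*} [NormedAddCommGroup V] [InnerProductSpace ℝ V] [MetricSpace P]
  [NormedAddTorsor V P]

theorem exists_ne_zero_inner_eq_zero (hV : Module.finrank ℝ V = 2) {v : V} (hv : v ≠ 0) :
    ∃ w : V, w ≠ 0 ∧ inner ℝ v w = 0 := by
  have : Fact (Module.finrank ℝ V = 1 + 1) := ⟨hV⟩
  have hfinrank : Module.finrank ℝ (ℝ ∙ v)ᗮ = 1 := Submodule.finrank_orthogonal_span_singleton hv
  have := Module.nontrivial_of_finrank_pos (R := ℝ) (hfinrank ▸ one_pos)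
  obtain ⟨w, hw⟩ := exists_ne (0 : (ℝ ∙ v)ᗮ)
  exact ⟨w, by simpa using hw, Submodule.mem_orthogonal_singleton_iff_inner_right.1 w.2⟩

theorem norm_smul_add_smul_sq {v w : V} (h : inner ℝ v w = 0) (a b : ℝ) :
    ‖a • v + b • w‖ ^ 2 = a ^ 2 * ‖v‖ ^ 2 + b ^ 2 * ‖w‖ ^ 2 := by
  rw [norm_add_sq_real, real_inner_smul_left, real_inner_smul_right, h, norm_smul, norm_smul,
    mul_pow, mul_pow, Real.norm_eq_abs, Real.norm_eq_abs, sq_abs, sq_abs]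
  ring

/-- In the triangle with sides `d`, `r₁`, `r₂`, the altitude on `d` has length `u` and its foot
divides `d` in the ratio `l : 1 - l`. -/
theorem exists_altitude {d r₁ r₂ : ℝ} (h₁ : |r₁ - r₂| < d) (h₂ : d < r₁ + r₂) :
    ∃ l u : ℝ, 0 < u ∧ l ^ 2 * d ^ 2 + u ^ 2 = r₁ ^ 2 ∧ (l - 1) ^ 2 * d ^ 2 + u ^ 2 = r₂ ^ 2 := by
  obtain ⟨h₃, h₄⟩ := abs_lt.1 h₁
  have hd : 0 < d := (abs_nonneg _).trans_lt h₁
  set l := (r₁ ^ 2 - r₂ ^ 2 + d ^ 2) / (2 * d ^ 2) with hl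
  have heron : r₁ ^ 2 - l ^ 2 * d ^ 2 =
      ((r₁ + r₂ + d) * (r₁ + r₂ - d)) * ((d + r₁ - r₂) * (d + r₂ - r₁)) / (4 * d ^ 2) := by
    rw [hl]
    field_simp
    ring
  have hpos : 0 < r₁ ^ 2 - l ^ 2 * d ^ 2 := by
    rw [heron]
    refine div_pos (mul_pos (mul_pos ?_ ?_) (mul_pos ?_ ?_)) (by positivity) <;> linarith
  refine ⟨l, √(r₁ ^ 2 - l ^ 2 * d ^ 2), Real.sqrt_pos.2 hpos, ?_, ?_⟩
  · rw [Real.sq_sqrt hpos.le]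
    ring
  · rw [Real.sq_sqrt hpos.le, hl]
    field_simp
    ring

theorem exists_ne_mem_sphere_inter_sphere (hV : Module.finrank ℝ V = 2) {c₁ c₂ : P} {r₁ r₂ : ℝ}
    (h₁ : |r₁ - r₂| < dist c₁ c₂) (h₂ : dist c₁ c₂ < r₁ + r₂) :
    ∃ p q, p ≠ q ∧ p ∈ sphere c₁ r₁ ∩ sphere c₂ r₂ ∧ q ∈ sphere c₁ r₁ ∩ sphere c₂ r₂ := by
  obtain ⟨l, u, hu, hl₁, hl₂⟩ := exists_altitude h₁ h₂
  obtain ⟨h₃, h₄⟩ := abs_lt.1 h₁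
  have hc : c₂ -ᵥ c₁ ≠ 0 :=
    vsub_ne_zero.2 (dist_pos.1 ((abs_nonneg _).trans_lt h₁)).symm
  obtain ⟨w, hw, hvw⟩ := exists_ne_zero_inner_eq_zero hV hc
  have hnorm : ‖c₂ -ᵥ c₁‖ = dist c₁ c₂ := by rw [dist_comm, dist_eq_norm_vsub V]
  have hmem (b : ℝ) (hb : b ^ 2 * ‖w‖ ^ 2 = u ^ 2) :
      (l • (c₂ -ᵥ c₁) + b • w) +ᵥ c₁ ∈ sphere c₁ r₁ ∩ sphere c₂ r₂ := by
    constructor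
    · rw [mem_sphere, dist_vadd_left, ← sq_eq_sq₀ (norm_nonneg _) (by linarith),
        norm_smul_add_smul_sq hvw, hb, hnorm, hl₁]
    · have hsub : ((l • (c₂ -ᵥ c₁) + b • w) +ᵥ c₁) -ᵥ c₂ = (l - 1) • (c₂ -ᵥ c₁) + b • w := by
        rw [vadd_vsub_assoc, ← neg_vsub_eq_vsub_rev c₂ c₁]
        module
      rw [mem_sphere, dist_eq_norm_vsub V, hsub, ← sq_eq_sq₀ (norm_nonneg _) (by linarith),
        norm_smul_add_smul_sq hvw, hb, hnorm, hl₂]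
  have hw' : ‖w‖ ≠ 0 := norm_ne_zero_iff.2 hw
  refine ⟨_, _, ?_, hmem (u / ‖w‖) (by field_simp), hmem (-(u / ‖w‖)) (by field_simp)⟩
  intro heq
  have hcoeff : u / ‖w‖ = -(u / ‖w‖) :=
    smul_left_injective ℝ hw (add_left_cancel (vadd_right_cancel _ heq))
  have : 0 < u / ‖w‖ := by positivity
  linarith

theorem ncard_sphere_inter_sphere_eq_two (hV : Module.finrank ℝ V = 2) {c₁ c₂ : P} {r₁ r₂ : ℝ}
    (h₁ : |r₁ - r₂| < dist c₁ c₂) (h₂ : dist c₁ c₂ < r₁ + r₂) :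
    (sphere c₁ r₁ ∩ sphere c₂ r₂).ncard = 2 := by
  have : FiniteDimensional ℝ V := .of_finrank_pos (by omega)
  have hc : c₁ ≠ c₂ := dist_pos.1 ((abs_nonneg _).trans_lt h₁)
  obtain ⟨p, q, hpq, hp, hq⟩ := exists_ne_mem_sphere_inter_sphere hV h₁ h₂
  refine Set.ncard_eq_two.2 ⟨p, q, hpq, Set.Subset.antisymm (fun x hx ↦ ?_) ?_⟩
  · exact EuclideanGeometry.eq_of_dist_eq_of_dist_eq_of_finrank_eq_two hV hc hpq
      hp.1 hq.1 hx.1 hp.2 hq.2 hx.2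
  · rintro x (rfl | rfl)
    exacts [hp, hq]

end SpheresInEuclideanPlane

section BallsWithoutCommonPoint

theorem collinear_of_mem_closedBall_of_dist_eq_add {V P : Type*} [NormedAddCommGroup V]
    [NormedSpace ℝ V] [StrictConvexSpace ℝ V] [MetricSpace P] [NormedAddTorsor V P]
    {a b c p : P} {r s t : ℝ} (hr : 0 < r) (hab : dist a b = r + s) (hac : dist a c = r + t)
    (ha : p ∈ closedBall a r) (hb : p ∈ closedBall b s) (hc : p ∈ closedBall c t) :
    Collinear ℝ {a, b, c} := by
  rw [mem_closedBall] at ha hb hc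
  rw [dist_comm] at ha
  have hap : dist a p = r := by linarith [dist_triangle a p b]
  have hne : a ≠ p := dist_pos.1 (hap ▸ hr)
  have hb' : Wbtw ℝ a p b := dist_add_dist_eq_iff.1 (by linarith [dist_triangle a p b])
  have hc' : Wbtw ℝ a p c := dist_add_dist_eq_iff.1 (by linarith [dist_triangle a p c])
  refine (collinear_insert_insert_of_mem_affineSpan_pair
    (hb'.right_mem_affineSpan_of_left_ne hne) (hc'.right_mem_affineSpan_of_left_ne hne)).subset ?_
  grind

theorem eventually_iInter_closedBall_add_eq_empty {ι X : Type*} [Nonempty ι] [PseudoMetricSpace X]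
    [ProperSpace X] {c : ι → X} {r : ι → ℝ} (h : ⋂ i, closedBall (c i) (r i) = ∅) :
    ∀ᶠ ε in 𝓝 (0 : ℝ), ⋂ i, closedBall (c i) (r i + ε) = ∅ := by
  obtain ⟨i₀⟩ := ‹Nonempty ι›
  have hcompact : ∀ᶠ ε in 𝓝 (0 : ℝ), ∀ x ∈ closedBall (c i₀) (r i₀ + 1),
      ∃ i, r i + ε < dist x (c i) := by
    refine (isCompact_closedBall _ _).eventually_forall_of_forall_eventually fun x _ ↦ ?_
    obtain ⟨i, hi⟩ : ∃ i, r i < dist x (c i) := by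
      simpa using Set.eq_empty_iff_forall_notMem.1 h x
    have hopen : IsOpen {z : ℝ × X | r i + z.1 < dist z.2 (c i)} :=
      isOpen_lt (by fun_prop) (by fun_prop)
    filter_upwards [hopen.mem_nhds (by simpa using hi)] with z hz using ⟨i, hz⟩
  filter_upwards [hcompact, ge_mem_nhds zero_lt_one] with ε hε hε₁
  refine Set.eq_empty_iff_forall_notMem.2 fun x hx ↦ ?_
  rw [Set.mem_iInter] at hx
  obtain ⟨i, hi⟩ := hε x (closedBall_subset_closedBall (by linarith) (hx i₀))
  exact hi.not_ge (hx i)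

end BallsWithoutCommonPoint

section RelatedPairs

variable {α : Type*}

/-- The unordered pairs of distinct elements of `S` related by `r`, the edge set of the graph that
`r` induces on `S`. -/
def relatedPairs (r : α → α → Prop) (S : Finset α) : Set (Sym2 α) :=
  {s | ∃ x y, x ∈ S ∧ y ∈ S ∧ x ≠ y ∧ s = s(x, y) ∧ r x y}

variable {r : α → α → Prop} {S : Finset α}

theorem finite_relatedPairs : (relatedPairs r S).Finite := by
  refine (S.finite_toSet.prod S.finite_toSet |>.image fun z ↦ s(z.1, z.2)).subset ?_
  rintro _ ⟨x, y, hx, hy, -, rfl, -⟩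
  exact ⟨(x, y), ⟨hx, hy⟩, rfl⟩

theorem ncard_relatedPairs_insert [DecidableEq α] {a : α} (ha : a ∉ S)
    (hrel : ∀ x ∈ S, r a x) :
    (relatedPairs r (insert a S)).ncard = S.card + (relatedPairs r S).ncard := by
  have hunion : relatedPairs r (insert a S) = (fun x ↦ s(a, x)) '' S ∪ relatedPairs r S := by
    ext z
    constructor
    · rintro ⟨x, y, hx, hy, hxy, rfl, h⟩
      rcases Finset.mem_insert.1 hx with rfl | hxS <;> rcases Finset.mem_insert.1 hy with rfl | hyS
      · exact absurd rfl hxy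
      · exact .inl ⟨y, hyS, rfl⟩
      · exact .inl ⟨x, hxS, Sym2.eq_swap⟩
      · exact .inr ⟨x, y, hxS, hyS, hxy, rfl, h⟩
    · rintro (⟨x, hx, rfl⟩ | ⟨x, y, hx, hy, h⟩)
      · exact ⟨a, x, Finset.mem_insert_self _ _, Finset.mem_insert_of_mem hx,
          (ne_of_mem_of_not_mem hx ha).symm, rfl, hrel x hx⟩
      · exact ⟨x, y, Finset.mem_insert_of_mem hx, Finset.mem_insert_of_mem hy, h⟩
  have hdisj : Disjoint ((fun x ↦ s(a, x)) '' (S : Set α)) (relatedPairs r S) := by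
    refine Set.disjoint_left.2 ?_
    rintro _ ⟨x, -, rfl⟩ ⟨y, z, hy, hz, -, heq, -⟩
    grind [Sym2.eq_iff]
  rw [hunion, Set.ncard_union_eq hdisj (S.finite_toSet.image _) finite_relatedPairs,
    Set.ncard_image_of_injective _ fun _ _ ↦ Sym2.congr_right.1, Set.ncard_coe_finset]

theorem relatedPairs_eq_singleton {a b : α} (ha : a ∈ S) (hb : b ∈ S) (hab : a ≠ b)
    (hrel : ∀ x ∈ S, ∀ y ∈ S, x ≠ y → (r x y ↔ s(x, y) = s(a, b))) :
    relatedPairs r S = {s(a, b)} := by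
  ext z
  constructor
  · rintro ⟨x, y, hx, hy, hxy, rfl, h⟩
    exact (hrel x hx y hy hxy).1 h
  · rintro rfl
    exact ⟨a, b, ha, hb, hab, rfl, (hrel a ha b hb hab).2 rfl⟩

end RelatedPairs

theorem iInter_fin_three {α : Type*} (s : Fin 3 → Set α) : ⋂ i, s i = s 0 ∩ s 1 ∩ s 2 := by
  ext
  simp [Fin.forall_fin_succ, and_assoc]

theorem dist_horizontal (x y : ℝ) : dist (!₂[x, 0] : Plane) !₂[y, 0] = |x - y| := by
  simp [EuclideanSpace.dist_eq, Real.dist_eq, Real.sqrt_sq_eq_abs]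

namespace Circle2

/-- Two circles cross if their radii and the distance of their centres are the sides of a
nondegenerate triangle, so that they meet in exactly two points. -/
def Crosses (C D : Circle2) : Prop :=
  |C.radius - D.radius| < dist C.center D.center ∧
    dist C.center D.center < C.radius + D.radius

/-- External tangency of two circles: their discs touch in a single boundary point. -/
def ExtTangent (C D : Circle2) : Prop :=
  dist C.center D.center = C.radius + D.radius

theorem Crosses.symm {C D : Circle2} (h : C.Crosses D) : D.Crosses C := by
  rwa [Crosses, abs_sub_comm, dist_comm, add_comm]

theorem Crosses.ne {C D : Circle2} (h : C.Crosses D) : C ≠ D := by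
  rintro rfl
  simpa using h.1

theorem ExtTangent.ne {C D : Circle2} (h : C.ExtTangent D) : C ≠ D := by
  rintro rfl
  rw [ExtTangent, dist_self] at h
  linarith [C.radius_pos]

theorem Crosses.ncard_sphere_inter_sphere {C D : Circle2} (h : C.Crosses D) :
    (C.sphere ∩ D.sphere).ncard = 2 :=
  ncard_sphere_inter_sphere_eq_two finrank_euclideanSpace_fin h.1 h.2

theorem sphere_nonempty (C : Circle2) : C.sphere.Nonempty :=
  NormedSpace.sphere_nonempty.2 C.radius_pos.le

theorem nonempty_sphere_inter_sphere_of_pairwise_crosses {S : Set Circle2}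
    (hS : S.Pairwise Crosses) {C D : Circle2} (hC : C ∈ S) (hD : D ∈ S) :
    (C.sphere ∩ D.sphere).Nonempty := by
  rcases eq_or_ne C D with rfl | hne
  · simpa using C.sphere_nonempty
  · refine Set.nonempty_of_ncard_ne_zero ?_
    rw [(hS hC hD hne).ncard_sphere_inter_sphere]
    exact two_ne_zero

theorem interior_disc_inter_disc {C D : Circle2} :
    interior (C.disc ∩ D.disc) = ball C.center C.radius ∩ ball D.center D.radius := by
  rw [disc, disc, interior_inter, interior_closedBall _ C.radius_pos.ne',
    interior_closedBall _ D.radius_pos.ne']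

theorem Crosses.createsLens_iff {F : Finset Circle2} {C D : Circle2} (h : C.Crosses D) :
    CreatesLens F C D ↔ ∀ E ∈ F,
      Disjoint (ball C.center C.radius ∩ ball D.center D.radius) E.sphere := by
  simp only [CreatesLens, h.ncard_sphere_inter_sphere, interior_disc_inter_disc, true_and,
    Set.disjoint_iff_inter_eq_empty]

theorem Crosses.createsLens {F : Finset Circle2} {C D : Circle2} (h : C.Crosses D)
    (hF : ∀ E ∈ F, E ≠ C → E ≠ D →
      Disjoint (ball C.center C.radius ∩ ball D.center D.radius) E.sphere) :
    CreatesLens F C D := by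
  refine h.createsLens_iff.2 fun E hE ↦ ?_
  rcases eq_or_ne E C with rfl | hEC
  · exact (sphere_disjoint_ball.symm).mono_left Set.inter_subset_left
  rcases eq_or_ne E D with rfl | hED
  · exact (sphere_disjoint_ball.symm).mono_left Set.inter_subset_right
  exact hF E hE hEC hED

theorem disjoint_sphere_of_disc_inter_eq_empty {C D E : Circle2}
    (h : C.disc ∩ D.disc ∩ E.disc = ∅) :
    Disjoint (ball C.center C.radius ∩ ball D.center D.radius) E.sphere :=
  (Set.disjoint_iff_inter_eq_empty.2 h).mono
    (Set.inter_subset_inter ball_subset_closedBall ball_subset_closedBall) sphere_subset_closedBall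

theorem ExtTangent.disc_inter_eq_empty {C D E : Circle2} (hD : C.ExtTangent D)
    (hE : C.ExtTangent E) (hCDE : ¬ Collinear ℝ {C.center, D.center, E.center}) :
    C.disc ∩ D.disc ∩ E.disc = ∅ :=
  Set.eq_empty_iff_forall_notMem.2 fun _ hp ↦ hCDE <|
    collinear_of_mem_closedBall_of_dist_eq_add C.radius_pos hD hE hp.1.1 hp.1.2 hp.2

/-- The concentric circle with radius larger by `ε`. -/
def enlarge (ε : ℝ≥0) (C : Circle2) : Circle2 :=
  ⟨C.center, C.radius + ε, add_pos_of_pos_of_nonneg C.radius_pos ε.2⟩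

theorem enlarge_injective (ε : ℝ≥0) : Function.Injective (enlarge ε) := by
  rintro ⟨c, r, _⟩ ⟨c', r', _⟩ h
  simpa [enlarge] using h

theorem Crosses.enlarge {C D : Circle2} (h : C.Crosses D) (ε : ℝ≥0) :
    (C.enlarge ε).Crosses (D.enlarge ε) := by
  obtain ⟨h₁, h₂⟩ := h
  refine ⟨by simpa [Circle2.enlarge] using h₁, ?_⟩
  simp only [Circle2.enlarge]
  linarith [ε.2]

theorem ExtTangent.crosses_enlarge {C D : Circle2} (h : C.ExtTangent D) {ε : ℝ≥0} (hε : 0 < ε) :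
    (C.enlarge ε).Crosses (D.enlarge ε) := by
  have hC := C.radius_pos
  have hD := D.radius_pos
  have hε' : (0 : ℝ) < ε := hε
  rw [ExtTangent] at h
  simp only [Crosses, Circle2.enlarge, add_sub_add_right_eq_sub, h, abs_lt]
  refine ⟨⟨?_, ?_⟩, ?_⟩ <;> linarith

theorem eventually_enlarge_disc_inter_eq_empty {C D E : Circle2}
    (h : C.disc ∩ D.disc ∩ E.disc = ∅) :
    ∀ᶠ ε in 𝓝 (0 : ℝ≥0), (C.enlarge ε).disc ∩ (D.enlarge ε).disc ∩ (E.enlarge ε).disc = ∅ := by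
  have hball := eventually_iInter_closedBall_add_eq_empty (c := fun i ↦ (![C, D, E] i).center)
    (r := fun i ↦ (![C, D, E] i).radius) (by rwa [iInter_fin_three])
  have hcoe : Tendsto ((↑) : ℝ≥0 → ℝ) (𝓝 0) (𝓝 0) := NNReal.continuous_coe.tendsto' _ _ rfl
  filter_upwards [hcoe.eventually hball] with ε hε
  rwa [iInter_fin_three] at hε

/-- Any three discs of `F` without a common point still have none after enlargement by `ε`. -/
def KeepsTriplesDisjoint (ε : ℝ≥0) (F : Finset Circle2) : Prop :=
  ∀ C ∈ F, ∀ D ∈ F, ∀ E ∈ F, C.disc ∩ D.disc ∩ E.disc = ∅ →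
    (C.enlarge ε).disc ∩ (D.enlarge ε).disc ∩ (E.enlarge ε).disc = ∅

theorem eventually_keepsTriplesDisjoint (F : Finset Circle2) :
    ∀ᶠ ε in 𝓝 (0 : ℝ≥0), KeepsTriplesDisjoint ε F := by
  simp only [KeepsTriplesDisjoint, Filter.eventually_all_finset, Filter.eventually_imp_distrib_left]
  exact fun C _ D _ E _ ↦ eventually_enlarge_disc_inter_eq_empty

theorem right_mem_sphere {C : Circle2} {s : ℝ} (hC : C.center = !₂[s, 0]) :
    !₂[s + C.radius, 0] ∈ C.sphere := by
  rw [sphere, mem_sphere, hC, dist_horizontal, add_sub_cancel_left, abs_of_pos C.radius_pos]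

theorem left_mem_sphere {C : Circle2} {s : ℝ} (hC : C.center = !₂[s, 0]) :
    !₂[s - C.radius, 0] ∈ C.sphere := by
  rw [sphere, mem_sphere, hC, dist_horizontal, sub_sub_cancel_left, abs_neg,
    abs_of_pos C.radius_pos]

theorem Crosses.right_mem_ball {C D : Circle2} (h : C.Crosses D) {s t : ℝ}
    (hC : C.center = !₂[s, 0]) (hD : D.center = !₂[t, 0]) (hst : s < t) :
    !₂[s + C.radius, 0] ∈ ball D.center D.radius := by
  obtain ⟨h₁, h₂⟩ := h
  rw [hC, hD, dist_horizontal, abs_sub_comm s t, abs_of_pos (sub_pos.2 hst)] at h₁ h₂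
  rw [mem_ball, hD, dist_horizontal, abs_lt]
  constructor <;> linarith [abs_lt.1 h₁]

theorem Crosses.left_mem_ball {C D : Circle2} (h : C.Crosses D) {s t : ℝ}
    (hC : C.center = !₂[s, 0]) (hD : D.center = !₂[t, 0]) (hst : s < t) :
    !₂[t - D.radius, 0] ∈ ball C.center C.radius := by
  obtain ⟨h₁, h₂⟩ := h
  rw [hC, hD, dist_horizontal, abs_sub_comm s t, abs_of_pos (sub_pos.2 hst)] at h₁ h₂
  rw [mem_ball, hC, dist_horizontal, abs_lt]
  constructor <;> linarith [abs_lt.1 h₁]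

end Circle2

theorem mul_eq_mul_of_collinear {ι : Type*} {a b c : EuclideanSpace ℝ ι}
    (h : Collinear ℝ {a, b, c}) (i j : ι) :
    (b i - a i) * (c j - a j) = (b j - a j) * (c i - a i) := by
  obtain ⟨v, hv⟩ := (collinear_iff_of_mem (p₀ := a) (by simp)).1 h
  obtain ⟨x, rfl⟩ := hv b (by simp)
  obtain ⟨y, rfl⟩ := hv c (by simp)
  simp only [vadd_eq_add, PiLp.add_apply, PiLp.smul_apply, smul_eq_mul]
  ring

section TangentCircles

theorem abs_sqrt_sq_add_one_sub_lt {s t : ℝ} (hst : s ≠ t) :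
    |√(s ^ 2 + 1) - √(t ^ 2 + 1)| < |s - t| := by
  have hs : √(s ^ 2 + 1) ^ 2 = s ^ 2 + 1 := Real.sq_sqrt (by positivity)
  have ht : √(t ^ 2 + 1) ^ 2 = t ^ 2 + 1 := Real.sq_sqrt (by positivity)
  have hpos : 0 < (s - t) ^ 2 := by
    have := sub_ne_zero.2 hst
    positivity
  have hmul : s * t + 1 < √(s ^ 2 + 1) * √(t ^ 2 + 1) := by
    refine lt_of_pow_lt_pow_left₀ 2 (by positivity) ?_
    rw [mul_pow, hs, ht]
    linarith
  rw [← sq_lt_sq]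
  linarith

theorem convexOn_sqrt_sq_add_one : ConvexOn ℝ Set.univ fun t : ℝ ↦ √(t ^ 2 + 1) := by
  refine ((convexOn_dist (!₂[0, 1] : Plane) convex_univ).comp_affineMap
    (AffineMap.lineMap 0 !₂[1, 0])).congr fun t _ ↦ ?_
  simp [EuclideanSpace.dist_eq, AffineMap.lineMap_apply]

/-- The unit circle centred at height `y` on the vertical axis. The construction takes `y = 1` and
`y = -1`, which makes two tangent circles. -/
def poleCircle (y : ℝ) : Circle2 := ⟨!₂[0, y], 1, one_pos⟩

/-- The circle centred at `(t, 0)` that is externally tangent to both pole circles. Restricting to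
`1 ≤ t` makes the radius positive and any two such circles cross. -/
def axisCircle (t : Set.Ici (1 : ℝ)) : Circle2 where
  center := !₂[t, 0]
  radius := √(t ^ 2 + 1) - 1
  radius_pos := by
    have ht : (1 : ℝ) ≤ t := t.2
    rw [sub_pos, Real.lt_sqrt zero_le_one]
    nlinarith

variable {y : ℝ} {s t : Set.Ici (1 : ℝ)} {ε : ℝ≥0}

theorem extTangent_poleCircle_poleCircle (hy : |y| = 1) :
    (poleCircle y).ExtTangent (poleCircle (-y)) := by
  simp [Circle2.ExtTangent, poleCircle, EuclideanSpace.dist_eq, Real.dist_eq, Real.sqrt_sq_eq_abs,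
    ← two_mul, abs_mul, hy]

theorem extTangent_poleCircle_axisCircle (hy : |y| = 1) :
    (poleCircle y).ExtTangent (axisCircle t) := by
  have hy_sq : y ^ 2 = 1 := by rw [← sq_abs, hy, one_pow]
  simp [Circle2.ExtTangent, poleCircle, axisCircle, EuclideanSpace.dist_eq, Real.dist_eq, hy_sq]

theorem crosses_axisCircle (hst : s ≠ t) : (axisCircle s).Crosses (axisCircle t) := by
  wlog hlt : s < t generalizing s t
  · exact (this hst.symm (hst.lt_or_gt.resolve_left hlt)).symm
  have hs : (1 : ℝ) ≤ s := s.2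
  have hlt' : (s : ℝ) < t := hlt
  have hsqrt_s : 1 < √((s : ℝ) ^ 2 + 1) := sub_pos.1 (axisCircle s).radius_pos
  have hsqrt_t : (t : ℝ) < √((t : ℝ) ^ 2 + 1) := Real.lt_sqrt_of_sq_lt (lt_add_one _)
  simp only [Circle2.Crosses, axisCircle, dist_horizontal, sub_sub_sub_cancel_right]
  refine ⟨abs_sqrt_sq_add_one_sub_lt hlt'.ne, ?_⟩
  rw [abs_sub_comm, abs_of_pos (sub_pos.2 hlt')]
  linarith

theorem axisCircle_injective : Function.Injective axisCircle :=
  fun _ _ h ↦ by_contra fun hst ↦ (crosses_axisCircle hst).ne h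

/-- The inequality says that the power of `p` with respect to the circle is negative, with the terms
rearranged so that the left-hand side is convex in `t` for `ε ≤ 1` and the right-hand side does not
depend on `t`. -/
theorem mem_ball_enlarge_axisCircle_iff {p : Plane} :
    p ∈ ball ((axisCircle t).enlarge ε).center ((axisCircle t).enlarge ε).radius ↔
      2 * (1 - ε) * √((t : ℝ) ^ 2 + 1) - 2 * p 0 * t < 1 + (1 - ε) ^ 2 - p 0 ^ 2 - p 1 ^ 2 := by
  have hsq : √((t : ℝ) ^ 2 + 1) ^ 2 = (t : ℝ) ^ 2 + 1 := Real.sq_sqrt (by positivity)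
  rw [mem_ball, ← sq_lt_sq₀ dist_nonneg ((axisCircle t).enlarge ε).radius_pos.le,
    EuclideanSpace.dist_sq_eq, Fin.sum_univ_two]
  simp only [Circle2.enlarge, axisCircle, Real.dist_eq, sq_abs, PiLp.toLp_apply,
    Matrix.cons_val_zero, Matrix.cons_val_one]
  constructor <;> intro h <;> linarith

theorem ball_inter_ball_subset_ball_axisCircle (hε : ε ≤ 1) {x : Set.Ici (1 : ℝ)} (hsx : s ≤ x)
    (hxt : x ≤ t) :
    ball ((axisCircle s).enlarge ε).center ((axisCircle s).enlarge ε).radius ∩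
        ball ((axisCircle t).enlarge ε).center ((axisCircle t).enlarge ε).radius ⊆
      ball ((axisCircle x).enlarge ε).center ((axisCircle x).enlarge ε).radius := by
  rintro p ⟨hs, ht⟩
  rw [mem_ball_enlarge_axisCircle_iff] at hs ht ⊢
  have hε' : (0 : ℝ) ≤ 2 * (1 - ε) := by
    have : (ε : ℝ) ≤ 1 := hε
    linarith
  have hconvex : ConvexOn ℝ Set.univ fun u : ℝ ↦ 2 * (1 - ε) * √(u ^ 2 + 1) - 2 * p 0 * u :=
    (convexOn_sqrt_sq_add_one.smul hε').sub
      ((LinearMap.mulLeft ℝ (2 * p 0)).concaveOn convex_univ)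
  exact ((hconvex.convex_lt _).ordConnected.out ⟨trivial, hs⟩ ⟨trivial, ht⟩ ⟨hsx, hxt⟩).2

end TangentCircles

theorem CreatesLens.symm {F : Finset Circle2} {C D : Circle2} (h : CreatesLens F C D) :
    CreatesLens F D C := by
  rwa [CreatesLens, Set.inter_comm, Set.inter_comm D.disc]

section Construction

variable {y : ℝ} {ε : ℝ≥0} {T : Finset (Set.Ici (1 : ℝ))}
  {a b s t x : Set.Ici (1 : ℝ)}

/-- The two pole circles together with the axis circles centred at the points of `T`: every pole
circle is externally tangent to all the others. -/
def tangentFamily (T : Finset (Set.Ici (1 : ℝ))) : Finset Circle2 :=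
  insert (poleCircle 1) (insert (poleCircle (-1)) (T.image axisCircle))

/-- The tangent configuration with all radii enlarged by `ε`, which for small `ε > 0` is the family
of `n = #T + 2` circles with `2n - 2` lenses. -/
def lensFamily (ε : ℝ≥0) (T : Finset (Set.Ici (1 : ℝ))) : Finset Circle2 :=
  (tangentFamily T).image (Circle2.enlarge ε)

theorem mem_tangentFamily (hy : |y| = 1) {C : Circle2} :
    C ∈ tangentFamily T ↔ C = poleCircle y ∨ C = poleCircle (-y) ∨ ∃ t ∈ T, axisCircle t = C := by
  rcases eq_or_eq_neg_of_abs_eq hy with rfl | rfl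
  · simp [tangentFamily]
  · simp [tangentFamily, or_left_comm]

theorem extTangent_of_mem_tangentFamily (hy : |y| = 1) {C : Circle2} (hC : C ∈ tangentFamily T)
    (hne : C ≠ poleCircle y) : (poleCircle y).ExtTangent C := by
  obtain rfl | ⟨t, -, rfl⟩ := ((mem_tangentFamily hy).1 hC).resolve_left hne
  · exact extTangent_poleCircle_poleCircle hy
  · exact extTangent_poleCircle_axisCircle hy

theorem not_collinear_of_mem_tangentFamily (hy : |y| = 1) {C D : Circle2}
    (hC : C ∈ tangentFamily T) (hD : D ∈ tangentFamily T) (hCy : C ≠ poleCircle y)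
    (hDy : D ≠ poleCircle y) (hCD : C ≠ D) :
    ¬ Collinear ℝ {(poleCircle y).center, C.center, D.center} := by
  intro hcol
  have hdet := mul_eq_mul_of_collinear hcol 0 1
  have hy₀ : y ≠ 0 := by
    rintro rfl
    simp at hy
  have ht₀ (t : Set.Ici (1 : ℝ)) : (t : ℝ) ≠ 0 := (one_pos.trans_le t.2).ne'
  obtain rfl | ⟨s, -, rfl⟩ := ((mem_tangentFamily hy).1 hC).resolve_left hCy <;>
    obtain rfl | ⟨t, -, rfl⟩ := ((mem_tangentFamily hy).1 hD).resolve_left hDy <;>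
    simp only [poleCircle, axisCircle, PiLp.toLp_apply, Matrix.cons_val_zero,
      Matrix.cons_val_one] at hdet
  · exact hCD rfl
  · exact mul_ne_zero hy₀ (ht₀ t) (by linarith)
  · exact mul_ne_zero hy₀ (ht₀ s) (by linarith)
  · have hst : (s : ℝ) ≠ t := Subtype.coe_ne_coe.2 (ne_of_apply_ne _ hCD)
    exact mul_ne_zero hy₀ (sub_ne_zero.2 hst) (by linarith)

theorem poleCircle_enlarge_disc_inter_eq_empty
    (hT : Circle2.KeepsTriplesDisjoint ε (tangentFamily T)) (hy : |y| = 1) {C D : Circle2}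
    (hC : C ∈ tangentFamily T) (hD : D ∈ tangentFamily T) (hCy : C ≠ poleCircle y)
    (hDy : D ≠ poleCircle y) (hCD : C ≠ D) :
    ((poleCircle y).enlarge ε).disc ∩ (C.enlarge ε).disc ∩ (D.enlarge ε).disc = ∅ :=
  hT _ ((mem_tangentFamily hy).2 (.inl rfl)) _ hC _ hD <|
    (extTangent_of_mem_tangentFamily hy hC hCy).disc_inter_eq_empty
      (extTangent_of_mem_tangentFamily hy hD hDy)
      (not_collinear_of_mem_tangentFamily hy hC hD hCy hDy hCD)

theorem pairwise_crosses_lensFamily (hε : 0 < ε) :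
    (lensFamily ε T : Set Circle2).Pairwise Circle2.Crosses := by
  have hpole {y : ℝ} (hy : |y| = 1) {C : Circle2} (hC : C ∈ tangentFamily T)
      (hne : C ≠ poleCircle y) : ((poleCircle y).enlarge ε).Crosses (C.enlarge ε) :=
    (extTangent_of_mem_tangentFamily hy hC hne).crosses_enlarge hε
  rw [lensFamily, Finset.coe_image]
  refine Set.Pairwise.image fun C hC D hD hCD ↦ ?_
  rcases (mem_tangentFamily abs_one).1 hC with rfl | rfl | ⟨s, -, rfl⟩
  · exact hpole abs_one hD hCD.symm
  · exact hpole (by simp) hD hCD.symm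
  rcases (mem_tangentFamily abs_one).1 hD with rfl | rfl | ⟨t, -, rfl⟩
  · exact (hpole abs_one hC hCD).symm
  · exact (hpole (by simp) hC hCD).symm
  · exact (crosses_axisCircle (ne_of_apply_ne _ hCD)).enlarge ε

theorem createsLens_poleCircle (hε : 0 < ε)
    (hT : Circle2.KeepsTriplesDisjoint ε (tangentFamily T)) (hy : |y| = 1) {C : Circle2}
    (hC : C ∈ tangentFamily T) (hne : C ≠ poleCircle y) :
    CreatesLens (lensFamily ε T) ((poleCircle y).enlarge ε) (C.enlarge ε) := by
  refine ((extTangent_of_mem_tangentFamily hy hC hne).crosses_enlarge hε).createsLens ?_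
  intro E' hE' hEy hEC
  obtain ⟨E, hE, rfl⟩ := Finset.mem_image.1 hE'
  exact Circle2.disjoint_sphere_of_disc_inter_eq_empty <|
    poleCircle_enlarge_disc_inter_eq_empty hT hy hC hE hne (ne_of_apply_ne _ hEy)
      (ne_of_apply_ne _ hEC).symm

theorem axisCircle_mem_tangentFamily (ht : t ∈ T) : axisCircle t ∈ tangentFamily T :=
  (mem_tangentFamily abs_one).2 (.inr (.inr ⟨t, ht, rfl⟩))

theorem createsLens_axisCircle (hε : ε ≤ 1)
    (hT : Circle2.KeepsTriplesDisjoint ε (tangentFamily T))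
    (ha : IsLeast (T : Set _) a) (hb : IsGreatest (T : Set _) b) (hab : a ≠ b) :
    CreatesLens (lensFamily ε T) ((axisCircle a).enlarge ε) ((axisCircle b).enlarge ε) := by
  refine ((crosses_axisCircle hab).enlarge ε).createsLens fun E' hE' _ _ ↦ ?_
  obtain ⟨E, hE, rfl⟩ := Finset.mem_image.1 hE'
  have hpole {y : ℝ} (hy : |y| = 1) :
      ((axisCircle a).enlarge ε).disc ∩ ((axisCircle b).enlarge ε).disc ∩
        ((poleCircle y).enlarge ε).disc = ∅ := by
    rw [Set.inter_comm, ← Set.inter_assoc]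
    exact poleCircle_enlarge_disc_inter_eq_empty hT hy (axisCircle_mem_tangentFamily ha.1)
      (axisCircle_mem_tangentFamily hb.1) (extTangent_poleCircle_axisCircle hy).ne.symm
      (extTangent_poleCircle_axisCircle hy).ne.symm (crosses_axisCircle hab).ne
  rcases (mem_tangentFamily abs_one).1 hE with rfl | rfl | ⟨x, hx, rfl⟩
  · exact Circle2.disjoint_sphere_of_disc_inter_eq_empty (hpole abs_one)
  · exact Circle2.disjoint_sphere_of_disc_inter_eq_empty (hpole (by simp))
  · exact sphere_disjoint_ball.symm.mono_left
      (ball_inter_ball_subset_ball_axisCircle hε (ha.2 hx) (hb.2 hx))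

theorem mem_Icc_of_createsLens_axisCircle (hst : s < t)
    (h : CreatesLens (lensFamily ε T) ((axisCircle s).enlarge ε) ((axisCircle t).enlarge ε))
    (hx : x ∈ T) : x ∈ Set.Icc s t := by
  have hcross {u v : Set.Ici (1 : ℝ)} (huv : u < v) :=
    (crosses_axisCircle huv.ne).enlarge ε
  have hdisj := Set.disjoint_left.1 <| (hcross hst).createsLens_iff.1 h _ <|
    Finset.mem_image_of_mem _ (axisCircle_mem_tangentFamily hx)
  constructor
  · by_contra! hxs
    have hxt := hxs.trans hst
    exact hdisj ⟨(hcross hxs).right_mem_ball rfl rfl hxs, (hcross hxt).right_mem_ball rfl rfl hxt⟩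
      (Circle2.right_mem_sphere rfl)
  · by_contra! htx
    have hsx := hst.trans htx
    exact hdisj ⟨(hcross hsx).left_mem_ball rfl rfl hsx, (hcross htx).left_mem_ball rfl rfl htx⟩
      (Circle2.left_mem_sphere rfl)

theorem relatedPairs_createsLens_axisCircle (hε : ε ≤ 1)
    (hT : Circle2.KeepsTriplesDisjoint ε (tangentFamily T))
    (ha : IsLeast (T : Set _) a) (hb : IsGreatest (T : Set _) b) (hab : a ≠ b) :
    relatedPairs (CreatesLens (lensFamily ε T)) ((T.image axisCircle).image (Circle2.enlarge ε)) =
      {s((axisCircle a).enlarge ε, (axisCircle b).enlarge ε)} := by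
  have hinj : Function.Injective fun t ↦ (axisCircle t).enlarge ε :=
    (Circle2.enlarge_injective ε).comp axisCircle_injective
  have hlens := createsLens_axisCircle hε hT ha hb hab
  have hends {s t : Set.Ici (1 : ℝ)} (hs : s ∈ T) (ht : t ∈ T) (hst : s < t)
      (h : CreatesLens (lensFamily ε T) ((axisCircle s).enlarge ε) ((axisCircle t).enlarge ε)) :
      s = a ∧ t = b :=
    ⟨(mem_Icc_of_createsLens_axisCircle hst h ha.1).1.antisymm (ha.2 hs),
      (hb.2 ht).antisymm (mem_Icc_of_createsLens_axisCircle hst h hb.1).2⟩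
  rw [Finset.image_image]
  refine relatedPairs_eq_singleton (Finset.mem_image_of_mem _ ha.1) (Finset.mem_image_of_mem _ hb.1)
    (hinj.ne hab) ?_
  simp only [Finset.forall_mem_image, Function.comp_apply]
  intro s hs t ht hst
  constructor
  · intro h
    rcases (hinj.ne_iff.1 hst).lt_or_gt with hlt | hlt
    · obtain ⟨rfl, rfl⟩ := hends hs ht hlt h
      rfl
    · obtain ⟨rfl, rfl⟩ := hends ht hs hlt h.symm
      exact Sym2.eq_swap
  · intro h
    rcases Sym2.eq_iff.1 h with ⟨h₁, h₂⟩ | ⟨h₁, h₂⟩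
    · rwa [h₁, h₂]
    · rw [h₁, h₂]
      exact hlens.symm

theorem poleCircle_notMem_image_axisCircle (hy : |y| = 1) : poleCircle y ∉ T.image axisCircle := by
  intro h
  obtain ⟨t, -, ht⟩ := Finset.mem_image.1 h
  exact (extTangent_poleCircle_axisCircle hy).ne ht.symm

theorem poleCircle_one_notMem_insert :
    poleCircle 1 ∉ insert (poleCircle (-1)) (T.image axisCircle) := by
  rw [Finset.mem_insert, not_or]
  exact ⟨(extTangent_poleCircle_poleCircle abs_one).ne, poleCircle_notMem_image_axisCircle abs_one⟩

theorem card_lensFamily : (lensFamily ε T).card = T.card + 2 := by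
  rw [lensFamily, Finset.card_image_of_injective _ (Circle2.enlarge_injective ε), tangentFamily,
    Finset.card_insert_of_notMem poleCircle_one_notMem_insert,
    Finset.card_insert_of_notMem (poleCircle_notMem_image_axisCircle (by simp)),
    Finset.card_image_of_injective _ axisCircle_injective]

theorem ncard_relatedPairs_insert_poleCircle (hε : 0 < ε)
    (hT : Circle2.KeepsTriplesDisjoint ε (tangentFamily T)) (hy : |y| = 1) {S : Finset Circle2}
    (hS : S ⊆ tangentFamily T) (hyS : poleCircle y ∉ S) :
    (relatedPairs (CreatesLens (lensFamily ε T))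
        ((insert (poleCircle y) S).image (Circle2.enlarge ε))).ncard =
      S.card +
        (relatedPairs (CreatesLens (lensFamily ε T)) (S.image (Circle2.enlarge ε))).ncard := by
  have hinj := Circle2.enlarge_injective ε
  rw [Finset.image_insert, ncard_relatedPairs_insert, Finset.card_image_of_injective _ hinj]
  · rwa [hinj.mem_finset_image]
  · rw [Finset.forall_mem_image]
    exact fun C hC ↦ createsLens_poleCircle hε hT hy (hS hC) (ne_of_mem_of_not_mem hC hyS)

theorem ncard_relatedPairs_lensFamily (hε : 0 < ε) (hε₁ : ε ≤ 1)
    (hT : Circle2.KeepsTriplesDisjoint ε (tangentFamily T)) (hcard : 1 < T.card) :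
    (relatedPairs (CreatesLens (lensFamily ε T)) (lensFamily ε T)).ncard = 2 * T.card + 2 := by
  have hne : T.Nonempty := Finset.card_pos.1 (by omega)
  have haxis := relatedPairs_createsLens_axisCircle hε₁ hT (T.isLeast_min' hne)
    (T.isGreatest_max' hne) (T.min'_lt_max'_of_card hcard).ne
  have hpoles := ncard_relatedPairs_insert_poleCircle hε hT abs_one
    (Finset.subset_insert _ _) poleCircle_one_notMem_insert
  have hpole := ncard_relatedPairs_insert_poleCircle hε hT (y := -1) (by simp)
    ((Finset.subset_insert _ _).trans (Finset.subset_insert _ _))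
    (poleCircle_notMem_image_axisCircle (by simp))
  rw [haxis, Set.ncard_singleton, Finset.card_image_of_injective _ axisCircle_injective] at hpole
  rw [hpole, Finset.card_insert_of_notMem (poleCircle_notMem_image_axisCircle (by simp)),
    Finset.card_image_of_injective _ axisCircle_injective] at hpoles
  rw [← tangentFamily, ← lensFamily] at hpoles
  omega

end Construction

/-- **Theorem (tightness).** For every `n ≥ 4` there is a family of `n` pairwise
intersecting, pairwise distinct circles in the plane with exactly `2n - 2` unordered
pairs of circles creating a lens in the arrangement. -/
theorem exists_family_with_two_n_sub_two_lenses (n : ℕ) (hn : 4 ≤ n) :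
    ∃ F : Finset Circle2, F.card = n ∧
      (∀ C1 ∈ F, ∀ C2 ∈ F, (C1.sphere ∩ C2.sphere).Nonempty) ∧
      {s : Sym2 Circle2 | ∃ C1 C2 : Circle2, C1 ∈ F ∧ C2 ∈ F ∧ C1 ≠ C2 ∧
        s = s(C1, C2) ∧ CreatesLens F C1 C2}.ncard = 2 * n - 2 := by
  obtain ⟨T, hT⟩ := Infinite.exists_subset_card_eq (Set.Ici (1 : ℝ)) (n - 2)
  have hsmall : ∀ᶠ ε in 𝓝[>] (0 : ℝ≥0),
      0 < ε ∧ ε ≤ 1 ∧ Circle2.KeepsTriplesDisjoint ε (tangentFamily T) :=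
    eventually_mem_nhdsWithin.and <| nhdsWithin_le_nhds <|
      (eventually_le_nhds one_pos).and (Circle2.eventually_keepsTriplesDisjoint _)
  obtain ⟨ε, hε, hε₁, hdisj⟩ := hsmall.exists
  refine ⟨lensFamily ε T, ?_, fun C hC D hD ↦ ?_, ?_⟩
  · rw [card_lensFamily]
    omega
  · exact Circle2.nonempty_sphere_inter_sphere_of_pairwise_crosses
      (pairwise_crosses_lensFamily hε) hC hD
  · refine (ncard_relatedPairs_lensFamily hε hε₁ hdisj (by omega)).trans ?_
    omega
end
end

section
/- Let F be a family of pairwise intersecting, pairwise distinct circles in the plane ℝ² such that no two circles of F touch (i.e., every two distinct circles of F intersect in exactly two points). Suppose {C1, C2} and {C3, C4} are two distinct unordered pairs of circles of F, each of which creates a lens in the arrangement A(F), and let A1, A2, A3, A4 be the centers of C1, C2, C3, C4 respectively. Then the closed segments [A1, A2] and [A3, A4] are not avoiding. -/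
open Metric Set

noncomputable section

/-- A set of points is in convex position if each point is a vertex of (i.e. is not in
the convex hull of the rest of) the set. -/
def ConvexPosition (s : Set Plane) : Prop :=
  ∀ x ∈ s, x ∉ convexHull ℝ (s \ {x})

/-- `a, b, c, d` are the vertices, in this cyclic order, of a convex quadrilateral:
they are pairwise distinct, in convex position, and the diagonals `[a,c]` and `[b,d]`
cross. -/
def ConvexQuadrilateral (a b c d : Plane) : Prop :=
  a ≠ b ∧ a ≠ c ∧ a ≠ d ∧ b ≠ c ∧ b ≠ d ∧ c ≠ d ∧
  ConvexPosition {a, b, c, d} ∧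
  (segment ℝ a c ∩ segment ℝ b d).Nonempty

/-- The closed segments `[a,b]` and `[c,d]` are avoiding: their endpoints are the
vertices of a convex quadrilateral in which the two segments are opposite sides. -/
def Avoiding (a b c d : Plane) : Prop :=
  ConvexQuadrilateral a b c d ∨ ConvexQuadrilateral a b d c

/-!
Write `pᵢ` for the power of a point with respect to `Cᵢ`, and let `z` be the crossing point of the
diagonals `[A₁, A₃]` and `[A₂, A₄]` of the quadrilateral of centers. Writing `z` as a convex
combination of `A₁, A₃` and of `A₂, A₄`, Stewart's identity shows that the corresponding convex
combinations of `p₁, p₃` and of `p₂, p₄` are both `x ↦ dist x z ^ 2` plus a constant. By symmetry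
the constant of `p₁, p₃` may be assumed to be the larger one. Let `x` be one of the two common
points of `C₁` and `C₃`. By Lagrange multipliers `p₁` has no local minimum on `C₃` at `x`, so if `x`
were inside `C₂`, then `C₃` would enter the lens of `C₁` and `C₂` near `x`; hence `p₂ x ≥ 0`, and
likewise `p₄ x ≥ 0`. But the combination of `p₁, p₃` vanishes at `x`, so the one of `p₂, p₄` is
nonpositive and `p₂ x = 0`. Thus `C₁`, `C₂`, `C₃` share two points, and their centers are collinear.
-/

open EuclideanGeometry Module Filter
open scoped RealInnerProductSpace

lemma setOf_power_eq_power_of_mem {P : Type*} [MetricSpace P] {s : Sphere P} {p : P} (hp : p ∈ s) :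
    {x | s.power x = s.power p} = s := by
  have hr : 0 ≤ s.radius := Sphere.radius_nonneg_of_mem hp
  ext x
  rw [(Sphere.power_eq_zero_iff_mem_sphere hr).2 hp, mem_ofPred_eq,
    Sphere.power_eq_zero_iff_mem_sphere hr, Sphere.mem_coe]

section InnerProductSpace

variable {E : Type*} [NormedAddCommGroup E] [InnerProductSpace ℝ E]

lemma affineCombo_power_eq_dist_sq_add {s t : Sphere E} {α β : ℝ} (hαβ : α + β = 1) {z : E}
    (hz : α • s.center + β • t.center = z) (x : E) :
    α * s.power x + β * t.power x = dist x z ^ 2 + (α * s.power z + β * t.power z) := by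
  have hα : α = 1 - β := by linarith
  subst hα hz
  have hx : x - ((1 - β) • s.center + β • t.center) =
      (1 - β) • (x - s.center) + β • (x - t.center) := by module
  have hs : (1 - β) • s.center + β • t.center - s.center =
      β • (x - s.center) - β • (x - t.center) := by module
  have ht : (1 - β) • s.center + β • t.center - t.center =
      (1 - β) • (x - t.center) - (1 - β) • (x - s.center) := by module
  simp only [Sphere.power, dist_eq_norm, hx, hs, ht, norm_add_sq_real, norm_sub_sq_real, norm_smul,
    real_inner_smul_left, real_inner_smul_right, mul_pow, Real.norm_eq_abs, sq_abs,
    real_inner_comm (x - s.center) (x - t.center)]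
  ring

lemma hasStrictFDerivAt_power (s : Sphere E) (x : E) :
    HasStrictFDerivAt s.power (2 • innerSL ℝ (x - s.center)) x := by
  have hpower : s.power = fun y ↦ ‖y - s.center‖ ^ 2 - s.radius ^ 2 := by
    ext y
    rw [Sphere.power, dist_eq_norm]
  rw [hpower]
  exact ((hasStrictFDerivAt_norm_sq (x - s.center)).comp x
    ((hasStrictFDerivAt_id x).sub_const s.center)).sub_const (s.radius ^ 2)

lemma two_mul_inner_sub_center_eq_neg_dist_sq {s : Sphere E} {p q : E} (hp : p ∈ s) (hq : q ∈ s) :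
    2 * ⟪p - s.center, q - p⟫ = -dist p q ^ 2 := by
  have h := norm_add_sq_real (p - s.center) (q - p)
  rw [add_comm (p - s.center), sub_add_sub_cancel, ← dist_eq_norm, ← dist_eq_norm,
    ← dist_eq_norm, EuclideanGeometry.mem_sphere.1 hp, EuclideanGeometry.mem_sphere.1 hq,
    dist_comm q p] at h
  linarith

section TwoCommonPoints

variable {s t u : Sphere E} {p q : E}

lemma center_eq_of_isLocalExtrOn_power [CompleteSpace E] (hpq : p ≠ q) (hps : p ∈ s) (hpt : p ∈ t)
    (hqs : q ∈ s) (hqt : q ∈ t) (hextr : IsLocalExtrOn t.power s p) : s.center = t.center := by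
  rw [← setOf_power_eq_power_of_mem hps] at hextr
  obtain ⟨a, b, hab, hcomb⟩ := hextr.exists_multipliers_of_hasStrictFDerivAt_1d
    (hasStrictFDerivAt_power s p) (hasStrictFDerivAt_power t p)
  have hmult (v : E) : a * (2 * ⟪p - s.center, v⟫) + b * (2 * ⟪p - t.center, v⟫) = 0 := by
    simpa [inner_sub_left] using DFunLike.congr_fun hcomb v
  have hb : b = -a := by
    have h := hmult (q - p)
    rw [two_mul_inner_sub_center_eq_neg_dist_sq hps hqs,
      two_mul_inner_sub_center_eq_neg_dist_sq hpt hqt, ← add_mul] at h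
    have hdist : -dist p q ^ 2 ≠ 0 := neg_ne_zero.2 (pow_ne_zero 2 (dist_ne_zero.2 hpq))
    linarith [(mul_eq_zero.1 h).resolve_right hdist]
  have ha : a ≠ 0 := by
    rintro rfl
    exact hab (by rw [hb, neg_zero]; rfl)
  refine ext_inner_right ℝ fun v ↦ mul_left_cancel₀ ha ?_
  have h := hmult v
  rw [hb, inner_sub_left, inner_sub_left] at h
  linarith

lemma mem_closure_sphere_inter_ball [CompleteSpace E] (hst : s.center ≠ t.center) (hpq : p ≠ q)
    (hps : p ∈ s) (hpt : p ∈ t) (hqs : q ∈ s) (hqt : q ∈ t) :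
    p ∈ closure (s ∩ ball t.center t.radius) := by
  have hr : 0 ≤ t.radius := Sphere.radius_nonneg_of_mem hpt
  by_contra hp
  rw [mem_closure_iff_frequently, not_frequently] at hp
  refine hst (center_eq_of_isLocalExtrOn_power hpq hps hpt hqs hqt (.inl ?_))
  refine eventually_nhdsWithin_iff.2 (hp.mono fun x hx hxs ↦ ?_)
  rw [(Sphere.power_eq_zero_iff_mem_sphere hr).2 hpt,
    Sphere.power_nonneg_iff_radius_le_dist_center hr]
  exact not_lt.1 fun hlt ↦ hx ⟨hxs, hlt⟩

lemma notMem_ball_of_disjoint_ball_inter_ball [CompleteSpace E] (hst : s.center ≠ t.center)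
    (hpq : p ≠ q) (hps : p ∈ s) (hpt : p ∈ t) (hqs : q ∈ s) (hqt : q ∈ t)
    (hdisj : Disjoint (ball t.center t.radius ∩ ball u.center u.radius) s) :
    p ∉ ball u.center u.radius := by
  intro hpu
  obtain ⟨x, hxu, hxs, hxt⟩ := mem_closure_iff.1
    (mem_closure_sphere_inter_ball hst hpq hps hpt hqs hqt) _ isOpen_ball hpu
  exact disjoint_left.1 hdisj ⟨hxt, hxu⟩ hxs

lemma collinear_perpBisector [Fact (finrank ℝ E = 2)] (hpq : p ≠ q) :
    Collinear ℝ (AffineSubspace.perpBisector p q : Set E) := by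
  have : FiniteDimensional ℝ E := .of_fact_finrank_eq_succ 1
  rw [collinear_iff_finrank_le_one, ← AffineSubspace.direction,
    AffineSubspace.direction_perpBisector, vsub_eq_sub,
    Submodule.finrank_orthogonal_span_singleton (n := 1) (sub_ne_zero.2 hpq.symm)]

lemma center_mem_perpBisector (hp : p ∈ s) (hq : q ∈ s) :
    s.center ∈ AffineSubspace.perpBisector p q :=
  AffineSubspace.mem_perpBisector_iff_dist_eq'.2
    ((EuclideanGeometry.mem_sphere.1 hp).trans (EuclideanGeometry.mem_sphere.1 hq).symm)

end TwoCommonPoints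

lemma power_eq_zero_of_affineCombo_power_le {s₁ s₂ s₃ s₄ : Sphere E} {α β γ δ : ℝ} {p z : E}
    (hαγ : α + γ = 1) (hz₁₃ : α • s₁.center + γ • s₃.center = z)
    (hβ : 0 < β) (hδ : 0 ≤ δ) (hβδ : β + δ = 1) (hz₂₄ : β • s₂.center + δ • s₄.center = z)
    (hle : β * s₂.power z + δ * s₄.power z ≤ α * s₁.power z + γ * s₃.power z)
    (hp₁ : s₁.power p = 0) (hp₃ : s₃.power p = 0) (hp₂ : 0 ≤ s₂.power p) (hp₄ : 0 ≤ s₄.power p) :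
    s₂.power p = 0 := by
  have hcombo : β * s₂.power p + δ * s₄.power p ≤ 0 := calc
    β * s₂.power p + δ * s₄.power p
      = dist p z ^ 2 + (β * s₂.power z + δ * s₄.power z) :=
        affineCombo_power_eq_dist_sq_add hβδ hz₂₄ p
    _ ≤ dist p z ^ 2 + (α * s₁.power z + γ * s₃.power z) := by gcongr
    _ = α * s₁.power p + γ * s₃.power p :=
        (affineCombo_power_eq_dist_sq_add hαγ hz₁₃ p).symm
    _ = 0 := by rw [hp₁, hp₃, mul_zero, mul_zero, add_zero]
  have hδp₄ : 0 ≤ δ * s₄.power p := mul_nonneg hδ hp₄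
  exact hp₂.antisymm' (nonpos_of_mul_nonpos_right (by linarith) hβ)

end InnerProductSpace

namespace ConvexPosition

variable {S : Set Plane} {x y z : Plane}

lemma notMem_segment (hS : ConvexPosition S) (hx : x ∈ S) (hy : y ∈ S) (hz : z ∈ S) (hxy : x ≠ y)
    (hxz : x ≠ z) : x ∉ segment ℝ y z := fun h ↦
  hS x hx (segment_subset_convexHull (s := S \ {x}) ⟨hy, hxy.symm⟩ ⟨hz, hxz.symm⟩ h)

lemma not_collinear (hS : ConvexPosition S) (hx : x ∈ S) (hy : y ∈ S) (hz : z ∈ S) (hxy : x ≠ y)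
    (hxz : x ≠ z) (hyz : y ≠ z) : ¬ Collinear ℝ {x, y, z} := by
  intro h
  rcases h.wbtw_or_wbtw_or_wbtw with hy' | hz' | hx'
  · exact hS.notMem_segment hy hx hz hxy.symm hyz hy'.mem_segment
  · exact hS.notMem_segment hz hy hx hyz.symm hxz.symm hz'.mem_segment
  · exact hS.notMem_segment hx hz hy hxz hxy hx'.mem_segment

end ConvexPosition

lemma ConvexQuadrilateral.openSegment_inter_openSegment_nonempty {a b c d : Plane}
    (h : ConvexQuadrilateral a b c d) : (openSegment ℝ a c ∩ openSegment ℝ b d).Nonempty := by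
  obtain ⟨hab, -, had, hbc, -, hcd, hconv, z, hzac, hzbd⟩ := h
  refine ⟨z, mem_openSegment_of_ne_left_right ?_ ?_ hzac,
    mem_openSegment_of_ne_left_right ?_ ?_ hzbd⟩ <;> rintro rfl
  · exact hconv.notMem_segment (by simp) (by simp) (by simp) hab had hzbd
  · exact hconv.notMem_segment (by simp) (by simp) (by simp) hbc.symm hcd hzbd
  · exact hconv.notMem_segment (by simp) (by simp) (by simp) hab.symm hbc hzac
  · exact hconv.notMem_segment (by simp) (by simp) (by simp) had.symm hcd.symm hzac

namespace Circle2

/-- A circle as a `Sphere` of Mathlib, giving access to the power of a point, `Sphere.power`. -/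
def toSphere (C : Circle2) : Sphere Plane := ⟨C.center, C.radius⟩

/-- The open lens of two circles: the interior of the intersection of their closed discs. -/
def lens (C D : Circle2) : Set Plane := interior (C.disc ∩ D.disc)

lemma lens_comm (C D : Circle2) : C.lens D = D.lens C := by
  rw [lens, lens, inter_comm]

lemma lens_eq_ball_inter_ball (C D : Circle2) :
    C.lens D = ball C.center C.radius ∩ ball D.center D.radius := by
  rw [lens, interior_inter, disc, disc, interior_closedBall _ C.radius_pos.ne',
    interior_closedBall _ D.radius_pos.ne']

variable {C₁ C₂ C₃ C₄ : Circle2} {p q : Plane}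

lemma power_nonneg_of_disjoint_lens (hcenter : C₁.center ≠ C₃.center) (hpq : p ≠ q)
    (hp : p ∈ C₁.sphere ∩ C₃.sphere) (hq : q ∈ C₁.sphere ∩ C₃.sphere)
    (hlens : Disjoint (C₁.lens C₂) C₃.sphere) : 0 ≤ C₂.toSphere.power p := by
  rw [lens_eq_ball_inter_ball] at hlens
  rw [Sphere.power_nonneg_iff_radius_le_dist_center C₂.radius_pos.le]
  exact not_lt.1 (notMem_ball_of_disjoint_ball_inter_ball (s := C₃.toSphere) (t := C₁.toSphere)
    (u := C₂.toSphere) hcenter.symm hpq hp.2 hp.1 hq.2 hq.1 hlens)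

lemma collinear_centers_of_disjoint_lens {α β γ δ : ℝ} {z : Plane}
    (hcenter : C₁.center ≠ C₃.center) (hmeet : (C₁.sphere ∩ C₃.sphere).Nontrivial)
    (hlens₁₂ : Disjoint (C₁.lens C₂) C₃.sphere) (hlens₃₄ : Disjoint (C₃.lens C₄) C₁.sphere)
    (hαγ : α + γ = 1) (hz₁₃ : α • C₁.center + γ • C₃.center = z)
    (hβ : 0 < β) (hδ : 0 ≤ δ) (hβδ : β + δ = 1) (hz₂₄ : β • C₂.center + δ • C₄.center = z)
    (hle : β * C₂.toSphere.power z + δ * C₄.toSphere.power z ≤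
      α * C₁.toSphere.power z + γ * C₃.toSphere.power z) :
    Collinear ℝ {C₁.center, C₂.center, C₃.center} := by
  have mem_sphere₂ {p q : Plane} (hpq : p ≠ q) (hp : p ∈ C₁.sphere ∩ C₃.sphere)
      (hq : q ∈ C₁.sphere ∩ C₃.sphere) : p ∈ C₂.toSphere := by
    have hp₂ : 0 ≤ C₂.toSphere.power p := power_nonneg_of_disjoint_lens hcenter hpq hp hq hlens₁₂
    have hp₄ : 0 ≤ C₄.toSphere.power p :=
      power_nonneg_of_disjoint_lens hcenter.symm hpq hp.symm hq.symm hlens₃₄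
    exact (Sphere.power_eq_zero_iff_mem_sphere C₂.radius_pos.le).1 <|
      power_eq_zero_of_affineCombo_power_le (s₁ := C₁.toSphere) (s₃ := C₃.toSphere)
        (s₄ := C₄.toSphere) hαγ hz₁₃ hβ hδ hβδ hz₂₄ hle
        ((Sphere.power_eq_zero_iff_mem_sphere C₁.radius_pos.le).2 hp.1)
        ((Sphere.power_eq_zero_iff_mem_sphere C₃.radius_pos.le).2 hp.2) hp₂ hp₄
  obtain ⟨p, hp, q, hq, hpq⟩ := hmeet
  have : Fact (finrank ℝ Plane = 2) := ⟨finrank_euclideanSpace_fin⟩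
  refine (collinear_perpBisector hpq).subset ?_
  rintro c (rfl | rfl | rfl)
  · exact center_mem_perpBisector (s := C₁.toSphere) hp.1 hq.1
  · exact center_mem_perpBisector (mem_sphere₂ hpq hp hq) (mem_sphere₂ hpq.symm hq hp)
  · exact center_mem_perpBisector (s := C₃.toSphere) hp.2 hq.2

end Circle2

lemma not_convexQuadrilateral_of_disjoint_lens {F : Set Circle2}
    (hmeet : F.Pairwise fun C D ↦ (C.sphere ∩ D.sphere).Nontrivial)
    {C₁ C₂ C₃ C₄ : Circle2} (h₁ : C₁ ∈ F) (h₂ : C₂ ∈ F) (h₃ : C₃ ∈ F) (h₄ : C₄ ∈ F)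
    (hlens₁₂ : ∀ C ∈ F, Disjoint (C₁.lens C₂) C.sphere)
    (hlens₃₄ : ∀ C ∈ F, Disjoint (C₃.lens C₄) C.sphere) :
    ¬ ConvexQuadrilateral C₁.center C₂.center C₃.center C₄.center := by
  intro hquad
  obtain ⟨z, ⟨α, γ, hα, hγ, hαγ, hz₁₃⟩, β, δ, hβ, hδ, hβδ, hz₂₄⟩ :=
    hquad.openSegment_inter_openSegment_nonempty
  obtain ⟨hA₁₂, hA₁₃, hA₁₄, hA₂₃, hA₂₄, -, hconv, -⟩ := hquad
  rcases le_total (β * C₂.toSphere.power z + δ * C₄.toSphere.power z)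
    (α * C₁.toSphere.power z + γ * C₃.toSphere.power z) with hle | hle
  · exact hconv.not_collinear (by simp) (by simp) (by simp) hA₁₂ hA₁₃ hA₂₃ <|
      Circle2.collinear_centers_of_disjoint_lens hA₁₃ (hmeet h₁ h₃ (ne_of_apply_ne _ hA₁₃))
        (hlens₁₂ C₃ h₃) (hlens₃₄ C₁ h₁) hαγ hz₁₃ hβ hδ.le hβδ hz₂₄ hle
  · rw [Circle2.lens_comm] at hlens₁₂ hlens₃₄
    exact hconv.not_collinear (by simp) (by simp) (by simp) hA₁₂.symm hA₂₄ hA₁₄ <|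
      Circle2.collinear_centers_of_disjoint_lens hA₂₄ (hmeet h₂ h₄ (ne_of_apply_ne _ hA₂₄))
        (hlens₁₂ C₄ h₄) (hlens₃₄ C₂ h₂) hβδ hz₂₄ hα hγ.le hαγ hz₁₃ hle

theorem lens_segments_not_avoiding_general {F : Set Circle2}
    (hmeet : F.Pairwise fun C D ↦ (C.sphere ∩ D.sphere).Nontrivial)
    {C₁ C₂ C₃ C₄ : Circle2} (h₁ : C₁ ∈ F) (h₂ : C₂ ∈ F) (h₃ : C₃ ∈ F) (h₄ : C₄ ∈ F)
    (hlens₁₂ : ∀ C ∈ F, Disjoint (C₁.lens C₂) C.sphere)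
    (hlens₃₄ : ∀ C ∈ F, Disjoint (C₃.lens C₄) C.sphere) :
    ¬ Avoiding C₁.center C₂.center C₃.center C₄.center := by
  rintro (hquad | hquad)
  · exact not_convexQuadrilateral_of_disjoint_lens hmeet h₁ h₂ h₃ h₄ hlens₁₂ hlens₃₄ hquad
  · rw [C₃.lens_comm] at hlens₃₄
    exact not_convexQuadrilateral_of_disjoint_lens hmeet h₁ h₂ h₄ h₃ hlens₁₂ hlens₃₄ hquad

lemma CreatesLens.disjoint_lens {F : Finset Circle2} {C₁ C₂ : Circle2} (h : CreatesLens F C₁ C₂) :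
    ∀ C ∈ F, Disjoint (C₁.lens C₂) C.sphere := fun C hC ↦
  disjoint_iff_inter_eq_empty.2 (h.2 C hC)

lemma nontrivial_of_ncard_eq_two {α : Type*} {s : Set α} (hs : s.ncard = 2) : s.Nontrivial :=
  (one_lt_ncard_iff_nontrivial_and_finite.1 (hs ▸ one_lt_two)).1

/-- **Theorem.** In a family of pairwise intersecting, pairwise distinct circles with
no two circles touching (every two distinct circles meet in exactly two points), the
segments between the centers of two distinct lens-creating pairs are never avoiding. -/
theorem lens_segments_not_avoiding (F : Finset Circle2)
    (hint : ∀ C1 ∈ F, ∀ C2 ∈ F, (C1.sphere ∩ C2.sphere).Nonempty)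
    (hnotouch : ∀ C1 ∈ F, ∀ C2 ∈ F, C1 ≠ C2 → (C1.sphere ∩ C2.sphere).ncard = 2)
    (C1 C2 C3 C4 : Circle2)
    (h1 : C1 ∈ F) (h2 : C2 ∈ F) (h3 : C3 ∈ F) (h4 : C4 ∈ F)
    (h12 : C1 ≠ C2) (h34 : C3 ≠ C4)
    (hpairs : ({C1, C2} : Finset Circle2) ≠ ({C3, C4} : Finset Circle2))
    (hL12 : CreatesLens F C1 C2) (hL34 : CreatesLens F C3 C4) :
    ¬ Avoiding C1.center C2.center C3.center C4.center := by
  exact lens_segments_not_avoiding_general (F := F)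
    (fun C hC D hD hCD ↦ nontrivial_of_ncard_eq_two (hnotouch C hC D hD hCD)) h1 h2 h3 h4
    hL12.disjoint_lens hL34.disjoint_lens
end
end

section
/- Let C1, C2, C3 be pairwise distinct circles in the plane ℝ² that all pass through a common point M, and suppose every two of them touch, that is, each of the intersections C1 ∩ C2, C1 ∩ C3, C2 ∩ C3 consists of the single point M. Then some pair among them touches internally: there exist i ≠ j in {1,2,3} such that the closed disc bounded by C_i contains the closed disc bounded by C_j. -/
open Metric Set

noncomputable section

/-!
Reflection in the line through the centers of two spheres preserves both spheres, so a unique common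
point is fixed by it and lies on that line: the spheres are tangent there, externally if the point
is between the centers and internally otherwise. If `s₁` is externally tangent to `s₂` and to `s₃`
at `p`, the centers of `s₂` and `s₃` lie on the same ray from `p`, so the tangency of `s₂` and `s₃`
is internal.
-/

open EuclideanGeometry

lemma wbtw_total_of_wbtw_of_wbtw {R V P : Type*} [Field R] [LinearOrder R] [IsStrictOrderedRing R]
    [AddCommGroup V] [Module R V] [AddTorsor V P] {a b c p : P}
    (hb : Wbtw R a p b) (hc : Wbtw R a p c) (hap : a ≠ p) : Wbtw R p b c ∨ Wbtw R p c b := by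
  have hray : SameRay R (b -ᵥ p) (c -ᵥ p) :=
    hb.sameRay_vsub.symm.trans hc.sameRay_vsub fun hpa ↦
      absurd (vsub_eq_zero_iff_eq.1 hpa).symm hap
  exact wbtw_total_of_sameRay_vsub_left hray

lemma reflection_mem_sphere {𝕜 V P : Type*} [RCLike 𝕜] [NormedAddCommGroup V]
    [InnerProductSpace 𝕜 V] [MetricSpace P] [NormedAddTorsor V P] {S : AffineSubspace 𝕜 P}
    [Nonempty S] [S.direction.HasOrthogonalProjection] {s : Sphere P} {p : P}
    (hS : s.center ∈ S) (hp : p ∈ s) : reflection S p ∈ s :=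
  EuclideanGeometry.mem_sphere'.2 <|
    (dist_reflection_eq_of_mem S hS p).trans (EuclideanGeometry.mem_sphere'.1 hp)

section Tangency

variable {V P : Type*} [NormedAddCommGroup V] [InnerProductSpace ℝ V] [MetricSpace P]
  [NormedAddTorsor V P] {s₁ s₂ s₃ : Sphere P} {p : P}

lemma mem_line_centers_of_inter_eq_singleton (h : (s₁ ∩ s₂ : Set P) = {p}) :
    p ∈ line[ℝ, s₁.center, s₂.center] := by
  obtain ⟨hp₁, hp₂⟩ : p ∈ (s₁ ∩ s₂ : Set P) := h ▸ mem_singleton p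
  have hreflection : reflection line[ℝ, s₁.center, s₂.center] p ∈ (s₁ ∩ s₂ : Set P) :=
    ⟨reflection_mem_sphere (left_mem_affineSpan_pair ℝ _ _) hp₁,
      reflection_mem_sphere (right_mem_affineSpan_pair ℝ _ _) hp₂⟩
  rw [h, mem_singleton_iff] at hreflection
  exact (reflection_eq_self_iff p).1 hreflection

lemma isExtTangentAt_or_isIntTangentAt_of_inter_eq_singleton (h : (s₁ ∩ s₂ : Set P) = {p}) :
    s₁.IsExtTangentAt s₂ p ∨ s₁.IsIntTangentAt s₂ p ∨ s₂.IsIntTangentAt s₁ p := by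
  obtain ⟨hp₁, hp₂⟩ : p ∈ (s₁ ∩ s₂ : Set P) := h ▸ mem_singleton p
  have hcollinear : Collinear ℝ {p, s₁.center, s₂.center} :=
    collinear_insert_of_mem_affineSpan_pair (mem_line_centers_of_inter_eq_singleton h)
  rcases hcollinear.wbtw_or_wbtw_or_wbtw with hw | hw | hw
  · exact .inr (.inl ⟨hp₁, hp₂, hw.symm⟩)
  · exact .inr (.inr ⟨hp₂, hp₁, hw⟩)
  · exact .inl ⟨hp₁, hp₂, hw.symm⟩

lemma isIntTangentAt_or_isIntTangentAt_of_isExtTangentAt (h₂ : s₁.IsExtTangentAt s₂ p)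
    (h₃ : s₁.IsExtTangentAt s₃ p) (hp : s₁.center ≠ p) :
    s₂.IsIntTangentAt s₃ p ∨ s₃.IsIntTangentAt s₂ p :=
  (wbtw_total_of_wbtw_of_wbtw h₂.wbtw h₃.wbtw hp).imp
    (⟨h₂.mem_right, h₃.mem_right, ·.symm⟩) (⟨h₃.mem_right, h₂.mem_right, ·.symm⟩)

lemma closedBall_subset_closedBall_of_isIntTangentAt (h : s₁.IsIntTangentAt s₂ p) :
    closedBall s₁.center s₁.radius ⊆ closedBall s₂.center s₂.radius :=
  closedBall_subset_closedBall' (by linarith [h.isIntTangent.dist_center])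

lemma isExtTangentAt_or_closedBall_subset_of_inter_eq_singleton
    (h : (s₁ ∩ s₂ : Set P) = {p}) :
    s₁.IsExtTangentAt s₂ p ∨
      closedBall s₁.center s₁.radius ⊆ closedBall s₂.center s₂.radius ∨
      closedBall s₂.center s₂.radius ⊆ closedBall s₁.center s₁.radius :=
  (isExtTangentAt_or_isIntTangentAt_of_inter_eq_singleton h).imp_right <|
    .imp closedBall_subset_closedBall_of_isIntTangentAt
      closedBall_subset_closedBall_of_isIntTangentAt

end Tangency

theorem three_mutually_touching_some_internal_general {V P : Type*} [NormedAddCommGroup V]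
    [InnerProductSpace ℝ V] [MetricSpace P] [NormedAddTorsor V P] {s₁ s₂ s₃ : Sphere P} {p : P}
    (h₁₂ : (s₁ ∩ s₂ : Set P) = {p}) (h₁₃ : (s₁ ∩ s₃ : Set P) = {p}) :
    closedBall s₁.center s₁.radius ⊆ closedBall s₂.center s₂.radius ∨
      closedBall s₂.center s₂.radius ⊆ closedBall s₁.center s₁.radius ∨
      closedBall s₁.center s₁.radius ⊆ closedBall s₃.center s₃.radius ∨
      closedBall s₃.center s₃.radius ⊆ closedBall s₁.center s₁.radius ∨
      closedBall s₂.center s₂.radius ⊆ closedBall s₃.center s₃.radius ∨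
      closedBall s₃.center s₃.radius ⊆ closedBall s₂.center s₂.radius := by
  rcases isExtTangentAt_or_closedBall_subset_of_inter_eq_singleton h₁₂ with ext₁₂ | nested₁₂
  · rcases isExtTangentAt_or_closedBall_subset_of_inter_eq_singleton h₁₃ with ext₁₃ | nested₁₃
    · rcases eq_or_ne s₁.center p with rfl | hp
      · have int₁₂ : s₁.IsIntTangentAt s₂ s₁.center :=
          Sphere.isIntTangentAt_center_iff.2 (Sphere.isExtTangentAt_center_iff.1 ext₁₂)
        exact .inl (closedBall_subset_closedBall_of_isIntTangentAt int₁₂)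
      · have nested₂₃ := (isIntTangentAt_or_isIntTangentAt_of_isExtTangentAt ext₁₂ ext₁₃ hp).imp
          closedBall_subset_closedBall_of_isIntTangentAt
          closedBall_subset_closedBall_of_isIntTangentAt
        tauto
    · tauto
  · tauto

/-- **Lemma.** Three pairwise distinct circles passing through a common point `M` and
pairwise touching (each pairwise intersection is exactly `{M}`) cannot pairwise touch
externally: some pair touches internally, i.e. one closed disc contains another. -/
theorem three_mutually_touching_some_internal (C1 C2 C3 : Circle2)
    (h12 : C1 ≠ C2) (h13 : C1 ≠ C3) (h23 : C2 ≠ C3) (M : Plane)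
    (t12 : C1.sphere ∩ C2.sphere = {M})
    (t13 : C1.sphere ∩ C3.sphere = {M})
    (t23 : C2.sphere ∩ C3.sphere = {M}) :
    C1.disc ⊆ C2.disc ∨ C2.disc ⊆ C1.disc ∨ C1.disc ⊆ C3.disc ∨
      C3.disc ⊆ C1.disc ∨ C2.disc ⊆ C3.disc ∨ C3.disc ⊆ C2.disc :=
  three_mutually_touching_some_internal_general (s₁ := ⟨C1.center, C1.radius⟩)
    (s₂ := ⟨C2.center, C2.radius⟩) (s₃ := ⟨C3.center, C3.radius⟩) t12 t13
end
end

section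
/- Let F be a finite family of pairwise intersecting, pairwise distinct circles in the plane ℝ², let C1 ∈ F have center A1, and let M be a point on the circle C1. Then there is at most one circle C2 ∈ F, with center A2, such that {C1, C2} creates a lens in the arrangement A(F), M ∈ C2 (so M is a vertex of the lens), and the points A1, A2, M appear in clockwise order, i.e., the determinant of the 2×2 matrix with columns A2 − A1 and M − A1 is negative. -/
open Metric Set

noncomputable section

/-!
Let `u`, `v`, `w` be the vectors from `M` to the centers of `C1`, `C2`, `C2'`. If a direction `d`
points into a circle through `M`, the ray from `M` along `d` meets the circle again, and this
second point lies inside another circle through `M` as soon as `d` has a larger inner product with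
the vector from `M` to the center of that other circle. Both `v` and `w` have `u` on their left.
If `v` is also to the left of `w`, or is a longer vector on the same ray, then turning the tangent
direction of `C2'` at `M` slightly inwards gives a direction `d` with `⟪d, w⟫` positive and
less than both `⟪d, u⟫` and `⟪d, v⟫`, so that `C2'` runs into the lens of `C1` and `C2`. Unless
`v = w`, this happens for `(v, w)` or for `(w, v)`, and neither may happen.
-/

open Filter Topology Module
open EuclideanGeometry (Sphere)
open scoped RealInnerProductSpace

section InnerProductSpace

variable {V P : Type*} [NormedAddCommGroup V] [InnerProductSpace ℝ V] [MetricSpace P]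
  [NormedAddTorsor V P]

lemma dist_secondInter_lt_dist {s : Sphere P} {p a : P} {d : V}
    (hs : 0 < ⟪d, s.center -ᵥ p⟫) (ha : 0 < ⟪d, a -ᵥ s.center⟫) :
    dist (s.secondInter p d) a < dist p a := by
  have hd : 0 < ⟪d, d⟫ := real_inner_self_pos.2 fun h => by simp [h] at hs
  have hcenter : ⟪d, p -ᵥ s.center⟫ = -⟪d, s.center -ᵥ p⟫ := by
    rw [← neg_vsub_eq_vsub_rev, inner_neg_right]
  have hsum : ⟪d, p -ᵥ a⟫ = -(⟪d, a -ᵥ s.center⟫ + ⟪d, s.center -ᵥ p⟫) := by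
    rw [← inner_add_right, vsub_add_vsub_cancel, ← neg_vsub_eq_vsub_rev, inner_neg_right]
  obtain ⟨r, hr⟩ : ∃ r, r = -2 * ⟪d, p -ᵥ s.center⟫ / ⟪d, d⟫ := ⟨_, rfl⟩
  have hr_pos : 0 < r := by rw [hr, hcenter]; exact div_pos (by linarith) hd
  have hr_mul : r * ⟪d, d⟫ = 2 * ⟪d, s.center -ᵥ p⟫ := by
    rw [hr, hcenter, div_mul_cancel₀ _ hd.ne']; ring
  have hexpand : ‖r • d + (p -ᵥ a)‖ ^ 2 = ‖p -ᵥ a‖ ^ 2 - 2 * r * ⟪d, a -ᵥ s.center⟫ := by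
    rw [norm_add_sq_real, norm_smul, mul_pow, Real.norm_eq_abs, sq_abs,
      ← real_inner_self_eq_norm_sq d, real_inner_smul_left, hsum]
    linear_combination r * hr_mul
  rw [Sphere.secondInter, ← hr, dist_eq_norm_vsub V, dist_eq_norm_vsub V p, vadd_vsub_assoc,
    ← sq_lt_sq₀ (norm_nonneg _) (norm_nonneg _), hexpand]
  exact sub_lt_self _ (by positivity)

lemma inner_sub_right_pos_of_sameRay_of_norm_lt {v w : V} (h : SameRay ℝ w v) (hw : w ≠ 0)
    (hlt : ‖w‖ < ‖v‖) : 0 < ⟪w, v - w⟫ := by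
  rw [inner_sub_right, inner_eq_norm_mul_iff_real.2 h.norm_smul_eq.symm,
    real_inner_self_eq_norm_mul_norm, ← mul_sub]
  exact mul_pos (norm_pos_iff.2 hw) (sub_pos.2 hlt)

end InnerProductSpace

section OrientedPlane

variable {V P : Type*} [NormedAddCommGroup V] [InnerProductSpace ℝ V] [Fact (finrank ℝ V = 2)]
  [MetricSpace P] [NormedAddTorsor V P] (o : Orientation ℝ V (Fin 2))

/-- The oriented angle from `w` to `x` lies in `[0, π)`, and neither vector is zero. If `w` points
from a point of a circle to its center, these are the `x` having positive inner product with the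
tangent direction `o.rightAngleRotation w`, once that is turned slightly inwards. -/
def InLeftSector (w x : V) : Prop :=
  0 < o.areaForm w x ∨ o.areaForm w x = 0 ∧ 0 < ⟪w, x⟫

variable {o}

lemma InLeftSector.eventually_inner_pos {w x : V} (h : InLeftSector o w x) :
    ∀ᶠ t : ℝ in 𝓝[>] 0, 0 < ⟪o.rightAngleRotation w + t • w, x⟫ := by
  simp only [inner_add_left, o.inner_rightAngleRotation_left, real_inner_smul_left]
  rcases h with hleft | ⟨hzero, hinner⟩
  · have hcont : ContinuousAt (fun t : ℝ => o.areaForm w x + t * ⟪w, x⟫) 0 := by fun_prop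
    exact (hcont.eventually_const_lt (by simpa using hleft)).filter_mono nhdsWithin_le_nhds
  · filter_upwards [self_mem_nhdsWithin] with t ht
    rw [hzero, zero_add]
    exact mul_pos ht hinner

lemma InLeftSector.left_ne_zero {w x : V} (h : InLeftSector o w x) : w ≠ 0 := by
  rintro rfl
  simp [InLeftSector] at h

lemma inLeftSector_sub_of_areaForm_pos {u w : V} (h : 0 < o.areaForm w u) :
    InLeftSector o w (u - w) :=
  Or.inl (by rwa [map_sub, o.areaForm_apply_self, sub_zero])

lemma inLeftSector_self {w : V} (hw : w ≠ 0) : InLeftSector o w w :=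
  Or.inr ⟨o.areaForm_apply_self w, real_inner_self_pos.2 hw⟩

lemma sameRay_of_areaForm_eq_zero_of_areaForm_pos {u v w : V} (hv : 0 < o.areaForm v u)
    (hw : 0 < o.areaForm w u) (hwv : o.areaForm w v = 0) : SameRay ℝ w v := by
  refine (o.nonneg_inner_and_areaForm_eq_zero_iff_sameRay w v).1 ⟨?_, hwv⟩
  have hmul : ⟪w, v⟫ * o.areaForm w u = ‖w‖ ^ 2 * o.areaForm v u := by
    simpa only [hwv, zero_mul, sub_zero] using o.inner_mul_areaForm_sub w v u
  exact nonneg_of_mul_nonneg_left (hmul ▸ by positivity) hw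

lemma inLeftSector_sub_or_inLeftSector_sub {u v w : V} (hv : 0 < o.areaForm v u)
    (hw : 0 < o.areaForm w u) (hne : v ≠ w) :
    InLeftSector o w (v - w) ∨ InLeftSector o v (w - v) := by
  have hv₀ : v ≠ 0 := fun h => by simp [h] at hv
  have hw₀ : w ≠ 0 := fun h => by simp [h] at hw
  simp only [InLeftSector, map_sub, o.areaForm_apply_self, sub_zero]
  rcases lt_trichotomy (o.areaForm w v) 0 with hneg | hzero | hpos
  · exact Or.inr (Or.inl (by rwa [o.areaForm_swap, neg_pos]))
  · have hray : SameRay ℝ w v := sameRay_of_areaForm_eq_zero_of_areaForm_pos hv hw hzero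
    have hnorm : ‖w‖ ≠ ‖v‖ := fun h => hne (hray.eq_of_norm_eq h).symm
    rcases hnorm.lt_or_gt with hlt | hgt
    · exact Or.inl (Or.inr ⟨hzero, inner_sub_right_pos_of_sameRay_of_norm_lt hray hw₀ hlt⟩)
    · refine Or.inr (Or.inr ⟨?_, inner_sub_right_pos_of_sameRay_of_norm_lt hray.symm hv₀ hgt⟩)
      rw [o.areaForm_swap, hzero, neg_zero]
  · exact Or.inl (Or.inl hpos)

lemma exists_mem_sphere_of_inLeftSector {M a b c : P}
    (ha : InLeftSector o (c -ᵥ M) (a -ᵥ c)) (hb : InLeftSector o (c -ᵥ M) (b -ᵥ c)) :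
    ∃ p ∈ sphere c (dist M c), p ∈ ball a (dist M a) ∩ ball b (dist M b) := by
  have hc : InLeftSector o (c -ᵥ M) (c -ᵥ M) := inLeftSector_self ha.left_ne_zero
  obtain ⟨t, hdc, hda, hdb⟩ := (hc.eventually_inner_pos.and
    (ha.eventually_inner_pos.and hb.eventually_inner_pos)).exists
  let s : Sphere P := ⟨c, dist M c⟩
  exact ⟨s.secondInter M (o.rightAngleRotation (c -ᵥ M) + t • (c -ᵥ M)), s.secondInter_dist M _,
    dist_secondInter_lt_dist hdc hda, dist_secondInter_lt_dist hdc hdb⟩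

theorem eq_of_disjoint_ball_inter_ball_sphere {M a b c : P}
    (hb : 0 < o.areaForm (b -ᵥ M) (a -ᵥ M)) (hc : 0 < o.areaForm (c -ᵥ M) (a -ᵥ M))
    (hab : Disjoint (ball a (dist M a) ∩ ball b (dist M b)) (sphere c (dist M c)))
    (hac : Disjoint (ball a (dist M a) ∩ ball c (dist M c)) (sphere b (dist M b))) :
    b = c := by
  have hsector_b := inLeftSector_sub_of_areaForm_pos hb
  have hsector_c := inLeftSector_sub_of_areaForm_pos hc
  by_contra hne
  have hsector := inLeftSector_sub_or_inLeftSector_sub hb hc fun h => hne (vsub_left_cancel h)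
  simp only [vsub_sub_vsub_cancel_right] at hsector_b hsector_c hsector
  rcases hsector with hcb | hbc
  · obtain ⟨p, hp, hlens⟩ := exists_mem_sphere_of_inLeftSector hsector_c hcb
    exact hab.notMem_of_mem_left hlens hp
  · obtain ⟨p, hp, hlens⟩ := exists_mem_sphere_of_inLeftSector hsector_b hbc
    exact hac.notMem_of_mem_left hlens hp

end OrientedPlane

instance : Fact (finrank ℝ Plane = 2) := ⟨finrank_euclideanSpace_fin⟩

/-- The standard (counterclockwise) orientation of the plane. -/
def planeOrientation : Orientation ℝ Plane (Fin 2) :=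
  (EuclideanSpace.basisFun (Fin 2) ℝ).toBasis.orientation

lemma planeOrientation_areaForm (x y : Plane) :
    planeOrientation.areaForm x y = x 0 * y 1 - x 1 * y 0 := by
  rw [Orientation.areaForm_to_volumeForm,
    planeOrientation.volumeForm_robust (EuclideanSpace.basisFun (Fin 2) ℝ) rfl,
    Basis.det_apply, Matrix.det_fin_two]
  simp [Basis.toMatrix_apply, mul_comm]

lemma planeOrientation_areaForm_sub_pos {a b m : Plane}
    (h : (b 0 - a 0) * (m 1 - a 1) - (b 1 - a 1) * (m 0 - a 0) < 0) :
    0 < planeOrientation.areaForm (b - m) (a - m) := by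
  simp only [planeOrientation_areaForm, PiLp.sub_apply]
  linarith

namespace Circle2

variable {C₁ C₂ C₃ : Circle2} {M : Plane}

lemma eq_of_center_eq_of_mem_sphere (hcenter : C₁.center = C₂.center) (h₁ : M ∈ C₁.sphere)
    (h₂ : M ∈ C₂.sphere) : C₁ = C₂ := by
  have hradius : C₁.radius = C₂.radius := by rw [← mem_sphere.1 h₁, hcenter, mem_sphere.1 h₂]
  cases C₁
  cases C₂
  congr

lemma disjoint_ball_inter_ball_sphere (h₁ : M ∈ C₁.sphere) (h₂ : M ∈ C₂.sphere)
    (h₃ : M ∈ C₃.sphere) (hlens : interior (C₁.disc ∩ C₂.disc) ∩ C₃.sphere = ∅) :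
    Disjoint (ball C₁.center (dist M C₁.center) ∩ ball C₂.center (dist M C₂.center))
      (Metric.sphere C₃.center (dist M C₃.center)) := by
  rw [mem_sphere.1 h₁, mem_sphere.1 h₂, mem_sphere.1 h₃]
  refine (disjoint_iff_inter_eq_empty.2 hlens).mono_left ?_
  rw [interior_inter]
  exact inter_subset_inter ball_subset_interior_closedBall ball_subset_interior_closedBall

end Circle2

theorem at_most_one_clockwise_lens_at_vertex_general {C₁ C₂ C₃ : Circle2} {M : Plane}
    (h₁ : M ∈ C₁.sphere) (h₂ : M ∈ C₂.sphere) (h₃ : M ∈ C₃.sphere)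
    (hdet₂ : (C₂.center 0 - C₁.center 0) * (M 1 - C₁.center 1) -
      (C₂.center 1 - C₁.center 1) * (M 0 - C₁.center 0) < 0)
    (hdet₃ : (C₃.center 0 - C₁.center 0) * (M 1 - C₁.center 1) -
      (C₃.center 1 - C₁.center 1) * (M 0 - C₁.center 0) < 0)
    (hlens₂ : interior (C₁.disc ∩ C₂.disc) ∩ C₃.sphere = ∅)
    (hlens₃ : interior (C₁.disc ∩ C₃.disc) ∩ C₂.sphere = ∅) :
    C₂ = C₃ := by
  have hcenter : C₂.center = C₃.center := eq_of_disjoint_ball_inter_ball_sphere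
    (planeOrientation_areaForm_sub_pos hdet₂) (planeOrientation_areaForm_sub_pos hdet₃)
    (Circle2.disjoint_ball_inter_ball_sphere h₁ h₂ h₃ hlens₂)
    (Circle2.disjoint_ball_inter_ball_sphere h₁ h₃ h₂ hlens₃)
  exact Circle2.eq_of_center_eq_of_mem_sphere hcenter h₂ h₃

/-- **Lemma (unique charging).** In a finite family of pairwise intersecting,
pairwise distinct circles, given a circle `C1` with center `A1` and a point `M` on
`C1`, there is at most one circle `C2` in the family (with center `A2`) such that
`{C1, C2}` creates a lens, `M` lies on `C2` (so `M` is a vertex of the lens), and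
`A1, A2, M` appear in clockwise order (the determinant of the matrix with columns
`A2 - A1` and `M - A1` is negative). -/
theorem at_most_one_clockwise_lens_at_vertex (F : Finset Circle2)
    (hint : ∀ C1 ∈ F, ∀ C2 ∈ F, (C1.sphere ∩ C2.sphere).Nonempty)
    (C1 : Circle2) (h1 : C1 ∈ F) (M : Plane) (hM : M ∈ C1.sphere) :
    ∀ C2 ∈ F, ∀ C2' ∈ F,
      (CreatesLens F C1 C2 ∧ M ∈ C2.sphere ∧
        (C2.center 0 - C1.center 0) * (M 1 - C1.center 1) -
          (C2.center 1 - C1.center 1) * (M 0 - C1.center 0) < 0) →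
      (CreatesLens F C1 C2' ∧ M ∈ C2'.sphere ∧
        (C2'.center 0 - C1.center 0) * (M 1 - C1.center 1) -
          (C2'.center 1 - C1.center 1) * (M 0 - C1.center 0) < 0) →
      C2 = C2' := by
  rintro C2 h2 C2' h2' ⟨hlens, hM2, hdet⟩ ⟨hlens', hM2', hdet'⟩
  exact at_most_one_clockwise_lens_at_vertex_general hM hM2 hM2' hdet hdet'
    (hlens.2 C2' h2') (hlens'.2 C2 h2)
end
end

section
/- Let F be a finite family of pairwise distinct circles in the plane ℝ², let {C1, C2} be a pair of circles of F creating a lens in the arrangement A(F), with D1 the closed disc bounded by C1, and let C3 ∈ F be a circle distinct from C1 and C2 that intersects C2 in exactly two points. Then no intersection point of C2 and C3 lies in the interior of D1; that is, C2 ∩ C3 ∩ interior(D1) = ∅. -/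
open Metric Set

noncomputable section

/-!
Let `p ≠ q` be the two points of `C2 ∩ C3`. On `C3`, lying inside `C2` means lying strictly on one
side of the radical hyperplane, which passes through `p` with normal `d`, the vector from the center
of `C3` to that of `C2`. As `q` lies on this hyperplane too, `C3` is not tangent to it at `p`: some
tangent vector `w` at `p` has `⟪w, d⟫ > 0`. The chords of `C3` from `p` in directions tilted
inwards from `w` end on the side of `d`, and their endpoints converge to `p` as the tilt vanishes.
So `C3` meets the inside of `C2` in every neighborhood of `p`; if `p` were interior to `D1`, then
`C3` would enter the lens.
-/

open EuclideanGeometry hiding mem_sphere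
open Filter Topology
open scoped RealInnerProductSpace

section InnerProductSpace

variable {V P : Type*} [NormedAddCommGroup V] [InnerProductSpace ℝ V] [MetricSpace P]
  [NormedAddTorsor V P]

theorem dist_lt_dist_iff_inner_vsub_pos_of_dist_eq {x p a b : P} (h : dist x a = dist p a) :
    dist x b < dist p b ↔ 0 < ⟪x -ᵥ p, b -ᵥ a⟫ := by
  have dist_sq_eq (y : P) :
      dist y b ^ 2 = dist y a ^ 2 - 2 * ⟪y -ᵥ a, b -ᵥ a⟫ + dist b a ^ 2 := by
    simp only [dist_eq_norm_vsub V]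
    rw [← vsub_sub_vsub_cancel_right y b a, norm_sub_sq_real]
  have inner_eq : ⟪x -ᵥ p, b -ᵥ a⟫ = ⟪x -ᵥ a, b -ᵥ a⟫ - ⟪p -ᵥ a, b -ᵥ a⟫ := by
    rw [← inner_sub_left, vsub_sub_vsub_cancel_right]
  rw [← sq_lt_sq₀ dist_nonneg dist_nonneg, dist_sq_eq x, dist_sq_eq p, h, inner_eq]
  constructor <;> intro <;> linarith

theorem continuousAt_secondInter (s : Sphere P) (p : P) {v : V} (hv : v ≠ 0) :
    ContinuousAt (s.secondInter p) v := by
  have : ⟪v, v⟫ ≠ 0 := inner_self_ne_zero.mpr hv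
  unfold Sphere.secondInter
  fun_prop (disch := assumption)

theorem inner_secondInter_vsub_pos {s : Sphere P} {p : P} {v d : V}
    (hv : ⟪v, p -ᵥ s.center⟫ < 0) (hd : 0 < ⟪v, d⟫) :
    0 < ⟪s.secondInter p v -ᵥ p, d⟫ := by
  have hv_ne : v ≠ 0 := by
    rintro rfl
    simp at hd
  have hvv : 0 < ⟪v, v⟫ := real_inner_self_pos.mpr hv_ne
  rw [Sphere.secondInter, vadd_vsub, real_inner_smul_left]
  exact mul_pos (div_pos (by linarith) hvv) hd

theorem mem_closure_sphere_inter_inner_vsub_pos {s : Sphere P} {p : P} {w d : V} (hp : p ∈ s)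
    (hpc : p ≠ s.center) (hw : ⟪w, p -ᵥ s.center⟫ = 0) (hd : 0 < ⟪w, d⟫) :
    p ∈ closure ((s : Set P) ∩ {x | 0 < ⟪x -ᵥ p, d⟫}) := by
  have hw_ne : w ≠ 0 := by
    rintro rfl
    simp at hd
  let tilt (ε : ℝ) : V := w - ε • (p -ᵥ s.center)
  have tilt_tendsto : Tendsto tilt (𝓝[>] 0) (𝓝 w) := by
    have : ContinuousAt tilt 0 := by fun_prop
    simpa [tilt] using this.tendsto.mono_left nhdsWithin_le_nhds
  have chord_tendsto : Tendsto (fun ε ↦ s.secondInter p (tilt ε)) (𝓝[>] 0) (𝓝 p) := by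
    have := (continuousAt_secondInter s p hw_ne).tendsto.comp tilt_tendsto
    rwa [Sphere.secondInter_eq_self_iff.mpr hw] at this
  have tilt_inward {ε : ℝ} (hε : 0 < ε) : ⟪tilt ε, p -ᵥ s.center⟫ < 0 := by
    have : 0 < ⟪p -ᵥ s.center, p -ᵥ s.center⟫ := real_inner_self_pos.mpr (vsub_ne_zero.mpr hpc)
    rw [inner_sub_left, hw, real_inner_smul_left, zero_sub]
    exact neg_neg_of_pos (mul_pos hε this)
  have tilt_inner_pos : ∀ᶠ ε in 𝓝[>] 0, 0 < ⟪tilt ε, d⟫ :=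
    (tilt_tendsto.inner tendsto_const_nhds).eventually_const_lt hd
  refine mem_closure_of_tendsto chord_tendsto ?_
  filter_upwards [tilt_inner_pos, self_mem_nhdsWithin] with ε hεd hε
  exact ⟨(Sphere.secondInter_mem _).mpr hp, inner_secondInter_vsub_pos (tilt_inward hε) hεd⟩

theorem exists_inner_radius_eq_zero_inner_pos {s : Sphere P} {p q : P} {d : V} (hp : p ∈ s)
    (hq : dist q s.center ≤ s.radius) (hpq : p ≠ q) (hd : d ≠ 0) (hdpq : ⟪p -ᵥ q, d⟫ = 0) :
    ∃ w : V, ⟪w, p -ᵥ s.center⟫ = 0 ∧ 0 < ⟪w, d⟫ := by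
  have chord_inner_pos : 0 < ⟪p -ᵥ q, p -ᵥ s.center⟫ :=
    (inner_pos_or_eq_of_dist_le_radius hp hq).resolve_right hpq
  -- `d` projected onto the tangent space at `p` along the chord, which is orthogonal to `d`
  refine ⟨d - (⟪d, p -ᵥ s.center⟫ / ⟪p -ᵥ q, p -ᵥ s.center⟫) • (p -ᵥ q), ?_, ?_⟩
  · rw [inner_sub_left, real_inner_smul_left, div_mul_cancel₀ _ chord_inner_pos.ne', sub_self]
  · rw [inner_sub_left, real_inner_smul_left, hdpq, mul_zero, sub_zero]
    exact real_inner_self_pos.mpr hd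

end InnerProductSpace

theorem mem_closure_sphere_inter_ball_of_mem_inter
    (V : Type*) {P : Type*} [NormedAddCommGroup V] [InnerProductSpace ℝ V] [MetricSpace P]
    [NormedAddTorsor V P] {s₁ s₂ : Sphere P} {p q : P} (hs : s₁ ≠ s₂) (hp₁ : p ∈ s₁)
    (hp₂ : p ∈ s₂) (hq₁ : q ∈ s₁) (hq₂ : q ∈ s₂) (hpq : p ≠ q) :
    p ∈ closure ((s₁ : Set P) ∩ ball s₂.center s₂.radius) := by
  have center_vsub_ne : (s₂.center -ᵥ s₁.center : V) ≠ 0 :=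
    vsub_ne_zero.mpr ((Sphere.center_ne_iff_ne_of_mem hp₁ hp₂).mpr hs).symm
  have chord_orthogonal : ⟪p -ᵥ q, s₂.center -ᵥ s₁.center⟫ = 0 := by
    rw [real_inner_comm]
    exact inner_vsub_vsub_of_mem_sphere_of_mem_sphere hq₁ hp₁ hq₂ hp₂
  have q_le_radius : dist q s₁.center ≤ s₁.radius := (mem_sphere.mp hq₁).le
  obtain ⟨w, hw, hwd⟩ :=
    exists_inner_radius_eq_zero_inner_pos hp₁ q_le_radius hpq center_vsub_ne chord_orthogonal
  have hpc : p ≠ s₁.center := by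
    intro hpc
    have := inner_pos_or_eq_of_dist_le_radius (V := V) hp₁ q_le_radius
    simp [← hpc, hpq] at this
  refine closure_mono ?_ (mem_closure_sphere_inter_inner_vsub_pos hp₁ hpc hw hwd)
  rintro x ⟨hx₁, hx⟩
  refine ⟨hx₁, ?_⟩
  rw [mem_ball, ← mem_sphere.mp hp₂]
  exact (dist_lt_dist_iff_inner_vsub_pos_of_dist_eq
    (dist_center_eq_dist_center_of_mem_sphere hx₁ hp₁)).mpr hx

theorem no_crossing_inside_lens_edge_general
    (V : Type*) {P : Type*} [NormedAddCommGroup V] [InnerProductSpace ℝ V] [MetricSpace P]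
    [NormedAddTorsor V P] {D : Set P} {s₂ s₃ : Sphere P} (hs : s₃ ≠ s₂)
    (hlens : interior (D ∩ closedBall s₂.center s₂.radius) ∩ (s₃ : Set P) = ∅)
    (hcross : ((s₂ : Set P) ∩ s₃).Nontrivial) :
    (s₂ : Set P) ∩ s₃ ∩ interior D = ∅ := by
  refine eq_empty_of_forall_notMem ?_
  rintro p ⟨⟨hp₂, hp₃⟩, hpD⟩
  obtain ⟨q, ⟨hq₂, hq₃⟩, hqp⟩ := hcross.exists_ne p
  obtain ⟨x, hxD, hx₃, hx₂⟩ := mem_closure_iff.mp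
    (mem_closure_sphere_inter_ball_of_mem_inter V hs hp₃ hp₂ hq₃ hq₂ hqp.symm)
    (interior D) isOpen_interior hpD
  refine eq_empty_iff_forall_notMem.mp hlens x ⟨?_, hx₃⟩
  rw [interior_inter]
  exact ⟨hxD, ball_subset_interior_closedBall hx₂⟩

/-- The circle as a sphere of Euclidean geometry in Mathlib. The underlying set of points is
definitionally `Circle2.sphere`. -/
def Circle2.toSphere_s12 (C : Circle2) : Sphere Plane := ⟨C.center, C.radius⟩

theorem Circle2.toSphere_injective : Function.Injective Circle2.toSphere_s12 := by
  rintro ⟨_, _, _⟩ ⟨_, _, _⟩ h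
  cases h
  rfl

/-- **Lemma.** If `{C1, C2}` creates a lens in the arrangement of `F` and `C3 ∈ F` is
a circle distinct from `C1` and `C2` meeting `C2` in exactly two points, then no
intersection point of `C2` and `C3` lies in the interior of the closed disc `D1`:
the edge `C2 ∩ D1` of the lens has no intersection points in its relative interior. -/
theorem no_crossing_inside_lens_edge (F : Finset Circle2) (C1 C2 C3 : Circle2)
    (h1 : C1 ∈ F) (h2 : C2 ∈ F) (h3 : C3 ∈ F) (h12 : C1 ≠ C2)
    (h31 : C3 ≠ C1) (h32 : C3 ≠ C2)
    (hlens : CreatesLens F C1 C2)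
    (hcross : (C2.sphere ∩ C3.sphere).ncard = 2) :
    C2.sphere ∩ C3.sphere ∩ interior C1.disc = ∅ := by
  have two_points := (one_lt_ncard_iff_nontrivial_and_finite.mp (hcross.symm ▸ one_lt_two)).1
  exact no_crossing_inside_lens_edge_general Plane (D := C1.disc) (s₂ := C2.toSphere_s12)
    (s₃ := C3.toSphere_s12) (Circle2.toSphere_injective.ne h32) (hlens.2 C3 h3) two_points
end
end
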